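/- arXiv:1603.04462 — 2 statements merged into one kernel-verified Lean document; each statement's English description precedes it below -/
import Mathlib

section
/- Suppose the triple (V₁, V₂, V₃) of mutually disjoint vertex sets of a 3-uniform hypergraph is (ε,d)-regular with d ≥ 2ε, the sizes satisfy m = |V₁| ≥ |V₂| ≥ |V₃| and 5|V₁| ≤ 3(|V₂| + |V₃|), and 2ε²m > 7. Then there is an M-tiling of (V₁,V₂,V₃) (a family of pairwise vertex-disjoint copies of M, each edge used having one vertex in each class) which leaves at most 3εm vertices of V₁ ∪ V₂ ∪ V₃ uncovered. -/
open Finset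

/-- The number of edges of `H` with exactly one vertex in each of `A₁`, `A₂`, `A₃`. -/
def eCross {V : Type} [DecidableEq V] (H : Finset (Finset V)) (A1 A2 A3 : Finset V) : ℕ :=
  (H.filter (fun e => (e ∩ A1).card = 1 ∧ (e ∩ A2).card = 1 ∧ (e ∩ A3).card = 1)).card

/-- The density of `H` with respect to the triple `(A₁, A₂, A₃)`. -/
noncomputable def triDensity {V : Type} [DecidableEq V] (H : Finset (Finset V))
    (A1 A2 A3 : Finset V) : ℝ :=
  (eCross H A1 A2 A3 : ℝ) / ((A1.card : ℝ) * (A2.card : ℝ) * (A3.card : ℝ))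

/-- The triple `(V₁, V₂, V₃)` is `(ε, d)`-regular in `H`. -/
def RegTriple {V : Type} [DecidableEq V] (H : Finset (Finset V)) (ε d : ℝ)
    (V1 V2 V3 : Finset V) : Prop :=
  ∀ A1 A2 A3 : Finset V, A1 ⊆ V1 → A2 ⊆ V2 → A3 ⊆ V3 →
    ε * V1.card ≤ A1.card → ε * V2.card ≤ A2.card → ε * V3.card ≤ A3.card →
    |triDensity H A1 A2 A3 - d| ≤ ε

/-- `g` describes a copy of the hypergraph `M` (vertices `{1,…,8}`, edges `{1,2,3}`,
`{3,4,5}`, `{4,5,6}`, `{6,7,8}`) inside the `3`-uniform hypergraph `H`. -/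
def IsMCopy {V : Type} [DecidableEq V] (H : Finset (Finset V)) (g : Fin 8 → V) : Prop :=
  Function.Injective g ∧
  ({g 0, g 1, g 2} : Finset V) ∈ H ∧ ({g 2, g 3, g 4} : Finset V) ∈ H ∧
  ({g 3, g 4, g 5} : Finset V) ∈ H ∧ ({g 5, g 6, g 7} : Finset V) ∈ H

/-- The four edges of the copy of `M` described by `g`. -/
def MCopyEdges {V : Type} [DecidableEq V] (g : Fin 8 → V) : Finset (Finset V) :=
  {({g 0, g 1, g 2} : Finset V), {g 2, g 3, g 4}, {g 3, g 4, g 5}, {g 5, g 6, g 7}}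


open Finset

/-- link of x in B × C -/
def lk {V : Type} [DecidableEq V] (H : Finset (Finset V)) (B C : Finset V) (x : V) :
    Finset (V × V) :=
  (B ×ˢ C).filter (fun p => ({x, p.1, p.2} : Finset V) ∈ H)

def cnt {V : Type} [DecidableEq V] (H : Finset (Finset V)) (A B C : Finset V) : ℕ :=
  ∑ x ∈ A, (lk H B C x).card

def Mc {V : Type} [DecidableEq V] (H : Finset (Finset V)) (A B C : Finset V) : Prop :=
  ∃ x ∈ A, ∃ x' ∈ A, ∃ u ∈ B, ∃ p ∈ B, ∃ p' ∈ B, ∃ v ∈ C, ∃ q ∈ C, ∃ q' ∈ C,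
    x ≠ x' ∧ u ≠ p ∧ u ≠ p' ∧ p ≠ p' ∧ v ≠ q ∧ v ≠ q' ∧ q ≠ q' ∧
    (u, v) ∈ lk H B C x ∧ (u, v) ∈ lk H B C x' ∧ (p, q) ∈ lk H B C x ∧ (p', q') ∈ lk H B C x'

section
variable {V : Type} [DecidableEq V]

lemma avoid_lines (Y Z : Finset V) (L : Finset (V × V)) (hL : L ⊆ Y ×ˢ Z) (R S : Finset V)
    (h : R.card * Z.card + S.card * Y.card < L.card) :
    ∃ c ∈ L, c.1 ∉ R ∧ c.2 ∉ S := by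
  by_contra hcon
  push Not at hcon
  have hsub : L ⊆ (R ×ˢ Z) ∪ (Y ×ˢ S) := by
    intro c hc
    have hc' := mem_product.1 (hL hc)
    by_cases h1 : c.1 ∈ R
    · exact mem_union_left _ (mem_product.2 ⟨h1, hc'.2⟩)
    · exact mem_union_right _ (mem_product.2 ⟨hc'.1, hcon c hc h1⟩)
  have := (card_le_card hsub).trans (card_union_le _ _)
  rw [card_product, card_product] at this
  nlinarith

lemma two_match (Y Z : Finset V) (M : ℕ) (hY : Y.card ≤ M) (hZ : Z.card ≤ M)
    (L : Finset (V × V)) (hL : L ⊆ Y ×ˢ Z) (h : M < L.card) :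
    ∃ a ∈ L, ∃ b ∈ L, a.1 ≠ b.1 ∧ a.2 ≠ b.2 := by
  by_contra hcon
  push Not at hcon
  obtain ⟨a, ha⟩ : L.Nonempty := card_pos.1 (by omega)
  -- some element with different row
  obtain ⟨b, hb, hb1, -⟩ := avoid_lines Y Z L hL {a.1} ∅ (by simp; omega)
  obtain ⟨c, hc, -, hc1⟩ := avoid_lines Y Z L hL ∅ {a.2} (by simp; omega)
  simp only [mem_singleton] at hb1 hc1
  have h1 := hcon a ha b hb (fun h => hb1 h.symm)
  have h2 : a.1 = c.1 := by
    by_contra h; exact hc1 (hcon a ha c hc h).symm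
  have h3 := hcon b hb c hc (by rw [← h2]; exact hb1)
  exact hc1 (by rw [← h3, h1])

lemma three_match (Y Z : Finset V) (M : ℕ) (hY : Y.card ≤ M) (hZ : Z.card ≤ M)
    (L : Finset (V × V)) (hL : L ⊆ Y ×ˢ Z) (h : 2 * M < L.card) :
    ∃ a ∈ L, ∃ b ∈ L, ∃ c ∈ L, a.1 ≠ b.1 ∧ a.2 ≠ b.2 ∧ a.1 ≠ c.1 ∧ a.2 ≠ c.2 ∧
      b.1 ≠ c.1 ∧ b.2 ≠ c.2 := by
  have hrow : ∀ u, (L.filter (fun c => c.1 = u)).card ≤ Z.card := by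
    intro u
    calc _ ≤ (({u} : Finset V) ×ˢ Z).card := by
            apply card_le_card
            intro c hc
            rw [mem_filter] at hc
            exact mem_product.2 ⟨by simp [hc.2], (mem_product.1 (hL hc.1)).2⟩
      _ = _ := by simp
  have hcol : ∀ u, (L.filter (fun c => c.2 = u)).card ≤ Y.card := by
    intro u
    calc _ ≤ (Y ×ˢ ({u} : Finset V)).card := by
            apply card_le_card
            intro c hc
            rw [mem_filter] at hc
            exact mem_product.2 ⟨(mem_product.1 (hL hc.1)).1, by simp [hc.2]⟩
      _ = _ := by simp
  by_cases hr : ∃ u, 3 ≤ (L.filter (fun c => c.1 = u)).card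
  · obtain ⟨u, hu⟩ := hr
    have hs := card_filter_add_card_filter_not (s := L) (fun c => c.1 = u)
    obtain ⟨a, ha, b, hb, hab1, hab2⟩ := two_match Y Z M hY hZ (L.filter (fun c => ¬ c.1 = u))
      ((filter_subset _ _).trans hL) (by have := hrow u; omega)
    rw [mem_filter] at ha hb
    obtain ⟨c, hc, hc2⟩ : ∃ c ∈ L.filter (fun c => c.1 = u), c.2 ∉ ({a.2, b.2} : Finset V) := by
      by_contra hcon
      push Not at hcon
      have : L.filter (fun c => c.1 = u) ⊆ ({u} : Finset V) ×ˢ ({a.2, b.2} : Finset V) := by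
        intro c hc
        exact mem_product.2 ⟨by simp [(mem_filter.1 hc).2], hcon c hc⟩
      have h1 := card_le_card this
      rw [card_product, card_singleton] at h1
      have : ({a.2, b.2} : Finset V).card ≤ 2 := card_le_two
      omega
    rw [mem_filter] at hc
    simp only [mem_insert, mem_singleton, not_or] at hc2
    exact ⟨a, ha.1, b, hb.1, c, hc.1, hab1, hab2, by rw [hc.2]; exact ha.2, fun h => hc2.1 h.symm,
      by rw [hc.2]; exact hb.2, fun h => hc2.2 h.symm⟩
  by_cases hr' : ∃ u, 3 ≤ (L.filter (fun c => c.2 = u)).card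
  · obtain ⟨u, hu⟩ := hr'
    have hs := card_filter_add_card_filter_not (s := L) (fun c => c.2 = u)
    obtain ⟨a, ha, b, hb, hab1, hab2⟩ := two_match Y Z M hY hZ (L.filter (fun c => ¬ c.2 = u))
      ((filter_subset _ _).trans hL) (by have := hcol u; omega)
    rw [mem_filter] at ha hb
    obtain ⟨c, hc, hc2⟩ : ∃ c ∈ L.filter (fun c => c.2 = u), c.1 ∉ ({a.1, b.1} : Finset V) := by
      by_contra hcon
      push Not at hcon
      have : L.filter (fun c => c.2 = u) ⊆ ({a.1, b.1} : Finset V) ×ˢ ({u} : Finset V) := by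
        intro c hc
        exact mem_product.2 ⟨hcon c hc, by simp [(mem_filter.1 hc).2]⟩
      have h1 := card_le_card this
      rw [card_product, card_singleton] at h1
      have : ({a.1, b.1} : Finset V).card ≤ 2 := card_le_two
      omega
    rw [mem_filter] at hc
    simp only [mem_insert, mem_singleton, not_or] at hc2
    exact ⟨a, ha.1, b, hb.1, c, hc.1, hab1, hab2, fun h => hc2.1 h.symm, by rw [hc.2]; exact ha.2,
      fun h => hc2.2 h.symm, by rw [hc.2]; exact hb.2⟩
  push Not at hr hr'
  have hM : 3 ≤ M := by
    by_contra hM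
    have h1 := card_le_card hL
    rw [card_product] at h1
    have h2 : Y.card * Z.card ≤ M * M := Nat.mul_le_mul hY hZ
    have : M * M ≤ 2 * M := Nat.mul_le_mul_right _ (by omega)
    omega
  -- kill count
  have kill : ∀ a ∈ L, (L.filter (fun c => c.1 = a.1 ∨ c.2 = a.2)).card ≤ 3 := by
    intro a ha
    have h1 : L.filter (fun c => c.1 = a.1 ∨ c.2 = a.2) =
        L.filter (fun c => c.1 = a.1) ∪ L.filter (fun c => c.2 = a.2) := filter_or _ _ _
    have h2 := card_union_add_card_inter (L.filter (fun c => c.1 = a.1)) (L.filter (fun c => c.2 = a.2))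
    have h3 : 0 < (L.filter (fun c => c.1 = a.1) ∩ L.filter (fun c => c.2 = a.2)).card :=
      card_pos.2 ⟨a, by simp [ha]⟩
    rw [h1]
    have := hr a.1
    have := hr' a.2
    omega
  obtain ⟨a, ha⟩ : L.Nonempty := card_pos.1 (by omega)
  have ka := kill a ha
  have sa := card_filter_add_card_filter_not (s := L) (fun c => c.1 = a.1 ∨ c.2 = a.2)
  obtain ⟨b, hb⟩ : (L.filter (fun c => ¬ (c.1 = a.1 ∨ c.2 = a.2))).Nonempty :=
    card_pos.1 (by omega)
  have hb' := mem_filter.1 hb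
  have kb := kill b hb'.1
  have sb := card_filter_add_card_filter_not (s := L.filter (fun c => ¬ (c.1 = a.1 ∨ c.2 = a.2)))
    (fun c => c.1 = b.1 ∨ c.2 = b.2)
  have kb' : ((L.filter (fun c => ¬ (c.1 = a.1 ∨ c.2 = a.2))).filter
    (fun c => c.1 = b.1 ∨ c.2 = b.2)).card ≤ 3 :=
    (card_le_card (filter_subset_filter _ (filter_subset _ _))).trans kb
  obtain ⟨c, hc⟩ : ((L.filter (fun c => ¬ (c.1 = a.1 ∨ c.2 = a.2))).filter
    (fun c => ¬ (c.1 = b.1 ∨ c.2 = b.2))).Nonempty := card_pos.1 (by omega)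
  rw [mem_filter, mem_filter] at hc
  push Not at hc hb'
  exact ⟨a, ha, b, hb'.1, c, hc.1.1, hb'.2.1.symm, hb'.2.2.symm, hc.1.2.1.symm, hc.1.2.2.symm,
    hc.2.1.symm, hc.2.2.symm⟩

variable (H : Finset (Finset V))

lemma lk_sub (B C : Finset V) (x : V) : lk H B C x ⊆ B ×ˢ C := filter_subset _ _

lemma mk_Mc {A B C : Finset V} {x x' : V} (hx : x ∈ A) (hx' : x' ∈ A) (hne : x ≠ x')
    {c a b : V × V} (hc : c ∈ lk H B C x) (hc' : c ∈ lk H B C x') (ha : a ∈ lk H B C x)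
    (hb : b ∈ lk H B C x') (h1 : c.1 ≠ a.1) (h2 : c.1 ≠ b.1) (h3 : a.1 ≠ b.1)
    (h4 : c.2 ≠ a.2) (h5 : c.2 ≠ b.2) (h6 : a.2 ≠ b.2) : Mc H A B C := by
  have m1 := mem_product.1 (lk_sub H B C x hc)
  have m2 := mem_product.1 (lk_sub H B C x ha)
  have m3 := mem_product.1 (lk_sub H B C x' hb)
  exact ⟨x, hx, x', hx', c.1, m1.1, a.1, m2.1, b.1, m3.1, c.2, m1.2, a.2, m2.2, b.2, m3.2,
    hne, h1, h2, h3, h4, h5, h6, hc, hc', ha, hb⟩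

lemma shape {B C : Finset V} {M : ℕ} (hB : B.card ≤ M) (hC : C.card ≤ M)
    (L : Finset (V × V)) (hL : L ⊆ B ×ˢ C) (hM : 2 * M < L.card) (c a b : V × V) (hcB : c.1 ∈ B)
    (hcC : c.2 ∈ C)
    (h : ∀ d ∈ L, d.1 ≠ c.1 → d.2 ≠ c.2 → d = a ∨ d = b) :
    L = (({c.1} ×ˢ C) ∪ (B ×ˢ {c.2})) ∪ {a, b} := by
  apply eq_of_subset_of_card_le
  · intro d hd
    have hd' := mem_product.1 (hL hd)
    simp only [mem_union, mem_product, mem_singleton, mem_insert]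
    by_cases h1 : d.1 = c.1
    · left; left; exact ⟨h1, hd'.2⟩
    by_cases h2 : d.2 = c.2
    · left; right; exact ⟨hd'.1, h2⟩
    right; exact h d hd h1 h2
  · have h1 := card_union_le ((({c.1} : Finset V) ×ˢ C) ∪ (B ×ˢ {c.2})) {a, b}
    have h2 := card_union_add_card_inter (({c.1} : Finset V) ×ˢ C) (B ×ˢ {c.2})
    have h3 : 0 < ((({c.1} : Finset V) ×ˢ C) ∩ (B ×ˢ {c.2})).card :=
      card_pos.2 ⟨c, by simp [hcB, hcC]⟩
    have h4 : ({a, b} : Finset (V × V)).card ≤ 2 := card_le_two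
    simp only [card_product, card_singleton, one_mul, mul_one] at h2
    omega

lemma type_lemma_aux {A B C : Finset V} {M : ℕ} (hB : B.card ≤ M) (hC : C.card ≤ M)
    {x : V} (hx : x ∈ A) (hxP : 2 * M < (lk H B C x).card)
    (D : Finset (V × V)) (hD : D ⊆ lk H B C x)
    (hsh : ∀ c ∈ D, ∃ x' ∈ A, x ≠ x' ∧ 2 * M < (lk H B C x').card ∧ c ∈ lk H B C x')
    (hcard : 2 * M < D.card) : Mc H A B C := by
  obtain ⟨c1, hc1, c2, hc2, c3, hc3, h12, h12', h13, h13', h23, h23'⟩ :=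
    three_match B C M hB hC D (hD.trans (lk_sub H B C x)) hcard
  obtain ⟨x', hx', hne, hx'P, hcx'⟩ := hsh c1 hc1
  by_contra hno
  have m1 := mem_product.1 (lk_sub H B C x (hD hc1))
  have key : ∀ d ∈ lk H B C x', d.1 ≠ c1.1 → d.2 ≠ c1.2 → ∀ a ∈ lk H B C x, a.1 ≠ c1.1 →
      a.2 ≠ c1.2 → a.1 ≠ d.1 → a.2 = d.2 := by
    intro d hd hd1 hd2 a ha ha1 ha2 had
    by_contra had2
    exact hno (mk_Mc H hx hx' hne (hD hc1) hcx' ha hd ha1.symm hd1.symm had ha2.symm hd2.symm had2)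
  have hG := shape hB hC (lk H B C x') (lk_sub H B C x') hx'P c1 (c2.1, c3.2) (c3.1, c2.2) m1.1 m1.2
    (by
      intro d hd hd1 hd2
      have e2 := key d hd hd1 hd2 c2 (hD hc2) h12.symm h12'.symm
      have e3 := key d hd hd1 hd2 c3 (hD hc3) h13.symm h13'.symm
      by_cases q2 : c2.1 = d.1
      · have : c3.2 = d.2 := e3 (by rw [← q2]; exact h23.symm)
        left; ext <;> simp [q2, this]
      · have q2' := e2 q2
        have : c3.1 = d.1 := by
          by_contra q3
          exact h23' (q2'.trans (e3 q3).symm)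
        right; ext <;> simp [q2', this])
  have g1 : (c2.1, c3.2) ∈ lk H B C x' := by rw [hG]; simp
  have g2 : (c3.1, c2.2) ∈ lk H B C x' := by rw [hG]; simp
  have hF := shape hB hC (lk H B C x) (lk_sub H B C x) hxP c1 c2 c3 m1.1 m1.2
    (by
      intro d hd hd1 hd2
      have e2 := key _ g1 h12.symm h13'.symm d hd hd1 hd2
      have e3 := key _ g2 h13.symm h12'.symm d hd hd1 hd2
      simp only at e2 e3
      by_cases q2 : d.1 = c2.1
      · have : d.2 = c2.2 := e3 (by rw [q2]; exact h23)
        left; ext <;> simp [q2, this]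
      · have q2' := e2 q2
        have : d.1 = c3.1 := by
          by_contra q3
          exact h23' ((e3 q3).symm.trans q2')
        right; ext <;> simp [q2', this])
  have m2 := mem_product.1 (lk_sub H B C x (hD hc2))
  have f1 : (c1.1, c2.2) ∈ lk H B C x := by rw [hF]; simp [m2.2]
  have f2 : (c1.1, c2.2) ∈ lk H B C x' := by rw [hG]; simp [m2.2]
  have f3 : (c2.1, c1.2) ∈ lk H B C x' := by rw [hG]; simp [m2.1]
  exact hno (mk_Mc H hx hx' hne f1 f2 (hD hc3) f3 h13 h12 h23.symm h23' h12'.symm h13'.symm)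

lemma type_lemma (A B C : Finset V) (M : ℕ) (hB : B.card ≤ M) (hC : C.card ≤ M)
    (h : B.card * C.card + 2 * A.card * M < cnt H A B C) : Mc H A B C := by
  classical
  by_contra hno
  set P := A.filter (fun x => 2 * M < (lk H B C x).card) with hP
  let D : V → Finset (V × V) := fun x => (lk H B C x).filter
    (fun c => ∃ x' ∈ A, x ≠ x' ∧ 2 * M < (lk H B C x').card ∧ c ∈ lk H B C x')
  have hDc : ∀ x ∈ P, (D x).card ≤ 2 * M := by
    intro x hx
    by_contra hlt
    rw [hP, mem_filter] at hx
    exact hno (type_lemma_aux H hB hC hx.1 hx.2 (D x) (filter_subset _ _)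
      (fun c hc => (mem_filter.1 hc).2) (by omega))
  have hU : ∑ x ∈ P, (lk H B C x \ D x).card ≤ B.card * C.card := by
    rw [← card_biUnion, ← card_product]
    · apply card_le_card
      intro c hc
      rw [mem_biUnion] at hc
      obtain ⟨x, hx, hc⟩ := hc
      exact lk_sub H B C x (mem_sdiff.1 hc).1
    · intro x hx y hy hxy
      rw [Function.onFun, disjoint_left]
      intro c hc hc'
      rw [mem_sdiff] at hc hc'
      rw [mem_coe, hP, mem_filter] at hx hy
      exact hc.2 (mem_filter.2 ⟨hc.1, y, hy.1, hxy, hy.2, hc'.1⟩)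
  have hsplit : cnt H A B C = ∑ x ∈ P, (lk H B C x).card +
      ∑ x ∈ A.filter (fun x => ¬ 2 * M < (lk H B C x).card), (lk H B C x).card := by
    rw [cnt, hP, sum_filter_add_sum_filter_not]
  have h1 : ∑ x ∈ P, (lk H B C x).card ≤ B.card * C.card + P.card * (2 * M) := by
    calc ∑ x ∈ P, (lk H B C x).card ≤ ∑ x ∈ P, ((lk H B C x \ D x).card + 2 * M) := by
          apply sum_le_sum
          intro x hx
          have := hDc x hx
          have h2 : (lk H B C x \ D x).card + (D x).card = (lk H B C x).card :=
            card_sdiff_add_card_eq_card (filter_subset _ _)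
          omega
      _ = ∑ x ∈ P, (lk H B C x \ D x).card + P.card * (2 * M) := by
          rw [sum_add_distrib, sum_const, smul_eq_mul]
      _ ≤ _ := by omega
  have h2 : ∑ x ∈ A.filter (fun x => ¬ 2 * M < (lk H B C x).card), (lk H B C x).card ≤
      (A.filter (fun x => ¬ 2 * M < (lk H B C x).card)).card * (2 * M) := by
    rw [← smul_eq_mul]
    apply sum_le_card_nsmul
    intro x hx
    have := (mem_filter.1 hx).2
    omega
  have h3 := card_filter_add_card_filter_not (s := A) (fun x => 2 * M < (lk H B C x).card)
  rw [← hP] at h3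
  have : 2 * A.card * M = P.card * (2 * M) +
    (A.filter (fun x => ¬ 2 * M < (lk H B C x).card)).card * (2 * M) := by
    rw [← h3]; ring
  omega
end

open Finset

section
variable {V : Type} [DecidableEq V] (H : Finset (Finset V))

lemma cnt_eq_sum (A B C : Finset V) :
    cnt H A B C = ∑ x ∈ A, ∑ y ∈ B, ∑ z ∈ C, if ({x, y, z} : Finset V) ∈ H then 1 else 0 := by
  unfold cnt lk
  refine sum_congr rfl fun x _ => ?_
  rw [card_filter, sum_product]

lemma cnt_swap23 (A B C : Finset V) : cnt H A B C = cnt H A C B := by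
  rw [cnt_eq_sum, cnt_eq_sum]
  refine sum_congr rfl fun x _ => ?_
  rw [sum_comm]
  refine sum_congr rfl fun z _ => sum_congr rfl fun y _ => ?_
  rw [pair_comm]

lemma cnt_swap12 (A B C : Finset V) : cnt H A B C = cnt H B A C := by
  rw [cnt_eq_sum, cnt_eq_sum, sum_comm]
  refine sum_congr rfl fun z _ => sum_congr rfl fun y _ => sum_congr rfl fun x _ => ?_
  rw [insert_comm]

lemma inter_one {A B C : Finset V} (h12 : Disjoint A B) (h13 : Disjoint A C)
    {x y z : V} (hx : x ∈ A) (hy : y ∈ B) (hz : z ∈ C) : ({x, y, z} : Finset V) ∩ A = {x} := by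
  have hy' : y ∉ A := fun h => (disjoint_left.1 h12) h hy
  have hz' : z ∉ A := fun h => (disjoint_left.1 h13) h hz
  ext a
  simp only [mem_inter, mem_insert, mem_singleton]
  constructor
  · rintro ⟨rfl | rfl | rfl, h⟩
    · rfl
    · exact absurd h hy'
    · exact absurd h hz'
  · rintro rfl
    exact ⟨Or.inl rfl, hx⟩

lemma inter_two {A B C : Finset V} (h12 : Disjoint A B) (h23 : Disjoint B C)
    {x y z : V} (hx : x ∈ A) (hy : y ∈ B) (hz : z ∈ C) : ({x, y, z} : Finset V) ∩ B = {y} := by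
  rw [insert_comm]; exact inter_one h12.symm h23 hy hx hz

lemma inter_three {A B C : Finset V} (h13 : Disjoint A C) (h23 : Disjoint B C)
    {x y z : V} (hx : x ∈ A) (hy : y ∈ B) (hz : z ∈ C) : ({x, y, z} : Finset V) ∩ C = {z} := by
  rw [pair_comm, insert_comm]; exact inter_one h13.symm h23.symm hz hx hy

lemma eCross_eq_cnt (hu : ∀ e ∈ H, e.card = 3) {A B C : Finset V} (h12 : Disjoint A B)
    (h13 : Disjoint A C) (h23 : Disjoint B C) : eCross H A B C = cnt H A B C := by
  have h1 : cnt H A B C =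
      ((A ×ˢ B ×ˢ C).filter (fun p => ({p.1, p.2.1, p.2.2} : Finset V) ∈ H)).card := by
    rw [cnt_eq_sum, card_filter, sum_product]
    refine sum_congr rfl fun x _ => ?_
    rw [sum_product]
  rw [h1, eCross]
  symm
  apply card_bij (fun p _ => ({p.1, p.2.1, p.2.2} : Finset V))
  · rintro ⟨x, y, z⟩ hp
    simp only [mem_filter, mem_product] at hp ⊢
    obtain ⟨⟨hx, hy, hz⟩, hH⟩ := hp
    refine ⟨hH, ?_, ?_, ?_⟩
    · rw [inter_one h12 h13 hx hy hz, card_singleton]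
    · rw [inter_two h12 h23 hx hy hz, card_singleton]
    · rw [inter_three h13 h23 hx hy hz, card_singleton]
  · rintro ⟨x, y, z⟩ hp ⟨x', y', z'⟩ hp' heq
    simp only [mem_filter, mem_product] at hp hp' heq
    obtain ⟨⟨hx, hy, hz⟩, hH⟩ := hp
    obtain ⟨⟨hx', hy', hz'⟩, hH'⟩ := hp'
    have e1 := inter_one h12 h13 hx hy hz
    have e2 := inter_two h12 h23 hx hy hz
    have e3 := inter_three h13 h23 hx hy hz
    rw [heq] at e1 e2 e3
    rw [inter_one h12 h13 hx' hy' hz', singleton_inj] at e1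
    rw [inter_two h12 h23 hx' hy' hz', singleton_inj] at e2
    rw [inter_three h13 h23 hx' hy' hz', singleton_inj] at e3
    rw [e1, e2, e3]
  · intro e he
    rw [mem_filter] at he
    obtain ⟨hH, h1, h2, h3⟩ := he
    obtain ⟨x, hx⟩ := card_eq_one.1 h1
    obtain ⟨y, hy⟩ := card_eq_one.1 h2
    obtain ⟨z, hz⟩ := card_eq_one.1 h3
    have hx' : x ∈ e ∩ A := by rw [hx]; simp
    have hy' : y ∈ e ∩ B := by rw [hy]; simp
    have hz' : z ∈ e ∩ C := by rw [hz]; simp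
    rw [mem_inter] at hx' hy' hz'
    have hxy : x ≠ y := fun h => disjoint_left.1 h12 hx'.2 (h ▸ hy'.2)
    have hxz : x ≠ z := fun h => disjoint_left.1 h13 hx'.2 (h ▸ hz'.2)
    have hyz : y ≠ z := fun h => disjoint_left.1 h23 hy'.2 (h ▸ hz'.2)
    have heq : ({x, y, z} : Finset V) = e := by
      apply eq_of_subset_of_card_le
      · intro a ha
        simp only [mem_insert, mem_singleton] at ha
        rcases ha with rfl | rfl | rfl
        · exact hx'.1
        · exact hy'.1
        · exact hz'.1
      · rw [hu e hH, card_eq_three.2 ⟨x, y, z, hxy, hxz, hyz, rfl⟩]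
    exact ⟨(x, y, z), by simp [hx'.2, hy'.2, hz'.2, heq, hH], heq⟩

lemma reg_bounds (hu : ∀ e ∈ H, e.card = 3) {V1 V2 V3 : Finset V} (h12 : Disjoint V1 V2)
    (h13 : Disjoint V1 V3) (h23 : Disjoint V2 V3) {ε d : ℝ} (hreg : RegTriple H ε d V1 V2 V3)
    {A B C : Finset V} (hA : A ⊆ V1) (hB : B ⊆ V2) (hC : C ⊆ V3)
    (cA : ε * V1.card ≤ A.card) (cB : ε * V2.card ≤ B.card) (cC : ε * V3.card ≤ C.card) :
    (d - ε) * (A.card * B.card * C.card) ≤ cnt H A B C ∧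
    cnt H A B C ≤ (d + ε) * (A.card * B.card * C.card) := by
  have h := hreg A B C hA hB hC cA cB cC
  rw [triDensity, eCross_eq_cnt H hu (disjoint_of_subset_left hA (disjoint_of_subset_right hB h12))
    (disjoint_of_subset_left hA (disjoint_of_subset_right hC h13))
    (disjoint_of_subset_left hB (disjoint_of_subset_right hC h23)), abs_le] at h
  by_cases hz : ((A.card : ℝ) * B.card * C.card) = 0
  · have : cnt H A B C = 0 := by
      have h0 : A = ∅ ∨ B = ∅ ∨ C = ∅ := by
        rcases mul_eq_zero.1 hz with h | h
        · rcases mul_eq_zero.1 h with h | h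
          · left; exact card_eq_zero.1 (by exact_mod_cast h)
          · right; left; exact card_eq_zero.1 (by exact_mod_cast h)
        · right; right; exact card_eq_zero.1 (by exact_mod_cast h)
      rw [cnt_eq_sum]
      rcases h0 with h | h | h <;> simp [h]
    rw [hz, this]; simp
  · have hp : 0 < ((A.card : ℝ) * B.card * C.card) := lt_of_le_of_ne (by positivity) (Ne.symm hz)
    constructor
    · rw [← le_div_iff₀ hp]; linarith
    · rw [← div_le_iff₀ hp]; linarith

lemma lk_mono {B C B' C' : Finset V} (hB : B ⊆ B') (hC : C ⊆ C') (x : V) :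
    lk H B C x ⊆ lk H B' C' x := by
  intro p hp
  simp only [lk, mem_filter, mem_product] at hp ⊢
  exact ⟨⟨hB hp.1.1, hC hp.1.2⟩, hp.2⟩

lemma mem_lk {B C : Finset V} {x : V} {p : V × V} :
    p ∈ lk H B C x ↔ (p.1 ∈ B ∧ p.2 ∈ C) ∧ ({x, p.1, p.2} : Finset V) ∈ H := by
  simp [lk]

lemma Mc.mono {A B C A' B' C' : Finset V} (hA : A ⊆ A') (hB : B ⊆ B') (hC : C ⊆ C')
    (h : Mc H A B C) : Mc H A' B' C' := by
  obtain ⟨x, hx, x', hx', u, hu, p, hp, p', hp', v, hv, q, hq, q', hq', h1, h2, h3, h4, h5, h6,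
    h7, h8, h9, h10, h11⟩ := h
  exact ⟨x, hA hx, x', hA hx', u, hB hu, p, hB hp, p', hB hp', v, hC hv, q, hC hq, q', hC hq',
    h1, h2, h3, h4, h5, h6, h7, lk_mono H hB hC _ h8, lk_mono H hB hC _ h9, lk_mono H hB hC _ h10,
    lk_mono H hB hC _ h11⟩

lemma Mc.shrink {A B C : Finset V} (h : Mc H A B C) : ∃ X Y Z, X ⊆ A ∧ Y ⊆ B ∧ Z ⊆ C ∧
    X.card = 2 ∧ Y.card = 3 ∧ Z.card = 3 ∧ Mc H X Y Z := by
  obtain ⟨x, hx, x', hx', u, hu, p, hp, p', hp', v, hv, q, hq, q', hq', h1, h2, h3, h4, h5, h6,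
    h7, h8, h9, h10, h11⟩ := h
  rw [mem_lk] at h8 h9 h10 h11
  refine ⟨{x, x'}, {u, p, p'}, {v, q, q'}, ?_, ?_, ?_, card_pair h1,
    card_eq_three.2 ⟨u, p, p', h2, h3, h4, rfl⟩, card_eq_three.2 ⟨v, q, q', h5, h6, h7, rfl⟩,
    x, by simp, x', by simp, u, by simp, p, by simp, p', by simp, v, by simp, q, by simp, q',
    by simp, h1, h2, h3, h4, h5, h6, h7, ?_, ?_, ?_, ?_⟩
  · simp [insert_subset_iff, hx, hx']
  · simp [insert_subset_iff, hu, hp, hp']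
  · simp [insert_subset_iff, hv, hq, hq']
  · rw [mem_lk]; exact ⟨by simp, h8.2⟩
  · rw [mem_lk]; exact ⟨by simp, h9.2⟩
  · rw [mem_lk]; exact ⟨by simp, h10.2⟩
  · rw [mem_lk]; exact ⟨by simp, h11.2⟩

lemma Mc.swap {A B C : Finset V} (h : Mc H A B C) : Mc H A C B := by
  obtain ⟨x, hx, x', hx', u, hu, p, hp, p', hp', v, hv, q, hq, q', hq', h1, h2, h3, h4, h5, h6,
    h7, h8, h9, h10, h11⟩ := h
  rw [mem_lk] at h8 h9 h10 h11
  simp only at h8 h9 h10 h11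
  refine ⟨x, hx, x', hx', v, hv, q, hq, q', hq', u, hu, p, hp, p', hp', h1, h5, h6, h7, h2, h3, h4,
    ?_, ?_, ?_, ?_⟩
  · rw [mem_lk]; exact ⟨⟨hv, hu⟩, by rw [pair_comm]; exact h8.2⟩
  · rw [mem_lk]; exact ⟨⟨hv, hu⟩, by rw [pair_comm]; exact h9.2⟩
  · rw [mem_lk]; exact ⟨⟨hq, hp⟩, by rw [pair_comm]; exact h10.2⟩
  · rw [mem_lk]; exact ⟨⟨hq', hp'⟩, by rw [pair_comm]; exact h11.2⟩

/-- some copy in the box -/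
def AnyM (A B C : Finset V) : Prop := Mc H A B C ∨ Mc H B A C ∨ Mc H C A B

lemma AnyM.s12 {A B C : Finset V} (h : AnyM H A B C) : AnyM H B A C := by
  rcases h with h | h | h
  · exact Or.inr (Or.inl h)
  · exact Or.inl h
  · exact Or.inr (Or.inr (Mc.swap H h))

lemma AnyM.s23 {A B C : Finset V} (h : AnyM H A B C) : AnyM H A C B := by
  rcases h with h | h | h
  · exact Or.inl (Mc.swap H h)
  · exact Or.inr (Or.inr h)
  · exact Or.inr (Or.inl h)

def Two (U1 U2 U3 : Finset V) : Prop := ∃ X1 X2 X3, X1 ⊆ U1 ∧ X2 ⊆ U2 ∧ X3 ⊆ U3 ∧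
  AnyM H X1 X2 X3 ∧ AnyM H (U1 \ X1) (U2 \ X2) (U3 \ X3)

lemma Two.s12 {A B C : Finset V} (h : Two H A B C) : Two H B A C := by
  obtain ⟨X, Y, Z, h1, h2, h3, h4, h5⟩ := h
  exact ⟨Y, X, Z, h2, h1, h3, h4.s12, h5.s12⟩

lemma Two.s23 {A B C : Finset V} (h : Two H A B C) : Two H A C B := by
  obtain ⟨X, Y, Z, h1, h2, h3, h4, h5⟩ := h
  exact ⟨X, Z, Y, h1, h3, h2, h4.s23, h5.s23⟩

end

open Finset

section
variable {V : Type} [DecidableEq V] (H : Finset (Finset V))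

lemma perm_aux1 (p q x : V) : ({p, q, x} : Finset V) = {x, p, q} := by
  ext a; simp only [mem_insert, mem_singleton]; tauto

lemma Mc.copy {A B C A' B' C' : Finset V} (h : Mc H A B C) (hA : A ⊆ A') (hB : B ⊆ B')
    (hC : C ⊆ C') (h12 : Disjoint A' B') (h13 : Disjoint A' C') (h23 : Disjoint B' C') :
    ∃ g : Fin 8 → V, IsMCopy H g ∧ (∀ a, g a ∈ A ∪ B ∪ C) ∧
      ∀ e ∈ MCopyEdges g, (e ∩ A').card = 1 ∧ (e ∩ B').card = 1 ∧ (e ∩ C').card = 1 := by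
  obtain ⟨x, hx, x', hx', u, hu, p, hp, p', hp', v, hv, q, hq, q', hq', h1, h2, h3, h4, h5, h6,
    h7, h8, h9, h10, h11⟩ := h
  rw [mem_lk] at h8 h9 h10 h11
  have AB : ∀ a ∈ A, ∀ b ∈ B, a ≠ b := fun a ha b hb h => disjoint_left.1 h12 (hA ha) (h ▸ hB hb)
  have AC : ∀ a ∈ A, ∀ b ∈ C, a ≠ b := fun a ha b hb h => disjoint_left.1 h13 (hA ha) (h ▸ hC hb)
  have BC : ∀ a ∈ B, ∀ b ∈ C, a ≠ b := fun a ha b hb h => disjoint_left.1 h23 (hB ha) (h ▸ hC hb)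
  have E : ∀ a ∈ A, ∀ b ∈ B, ∀ c ∈ C, (({a, b, c} : Finset V) ∩ A').card = 1 ∧
      (({a, b, c} : Finset V) ∩ B').card = 1 ∧ (({a, b, c} : Finset V) ∩ C').card = 1 := by
    intro a ha b hb c hc
    rw [inter_one h12 h13 (hA ha) (hB hb) (hC hc), inter_two h12 h23 (hA ha) (hB hb) (hC hc),
      inter_three h13 h23 (hA ha) (hB hb) (hC hc)]
    simp
  refine ⟨![p, q, x, u, v, x', p', q'], ⟨?_, ?_, ?_, ?_, ?_⟩, ?_, ?_⟩
  · rw [← List.nodup_ofFn]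
    simp [List.ofFn_succ, h1, h2.symm, h3, h4, h5.symm, h6, h7, BC, AB x hx, AC x hx, AC x' hx', AB x' hx', (AB _ _ _ _).symm,
      (AC _ _ _ _).symm, (BC _ _ _ _).symm, *]
  · show ({p, q, x} : Finset V) ∈ H
    rw [perm_aux1]; exact h10.2
  · exact h8.2
  · show ({u, v, x'} : Finset V) ∈ H
    rw [perm_aux1]; exact h9.2
  · exact h11.2
  · intro a
    fin_cases a <;> simp [*]
  · intro e he
    have he' : e = {p, q, x} ∨ e = {x, u, v} ∨ e = {u, v, x'} ∨ e = {x', p', q'} := by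
      simpa [MCopyEdges] using he
    rcases he' with rfl | rfl | rfl | rfl
    · rw [perm_aux1]; exact E x hx p hp q hq
    · exact E x hx u hu v hv
    · rw [perm_aux1]; exact E x' hx' u hu v hv
    · exact E x' hx' p' hp' q' hq'

lemma AnyM.copy {A B C A' B' C' : Finset V} (h : AnyM H A B C) (hA : A ⊆ A') (hB : B ⊆ B')
    (hC : C ⊆ C') (h12 : Disjoint A' B') (h13 : Disjoint A' C') (h23 : Disjoint B' C') :
    ∃ g : Fin 8 → V, IsMCopy H g ∧ (∀ a, g a ∈ A ∪ B ∪ C) ∧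
      ∀ e ∈ MCopyEdges g, (e ∩ A').card = 1 ∧ (e ∩ B').card = 1 ∧ (e ∩ C').card = 1 := by
  rcases h with h | h | h
  · exact h.copy H hA hB hC h12 h13 h23
  · obtain ⟨g, h1, h2, h3⟩ := h.copy H hB hA hC h12.symm h23 h13
    refine ⟨g, h1, fun a => ?_, fun e he => ⟨(h3 e he).2.1, (h3 e he).1, (h3 e he).2.2⟩⟩
    have := h2 a
    simp only [mem_union] at this ⊢
    tauto
  · obtain ⟨g, h1, h2, h3⟩ := h.copy H hC hA hB h13.symm h23.symm h12
    refine ⟨g, h1, fun a => ?_, fun e he => ⟨(h3 e he).2.1, (h3 e he).2.2, (h3 e he).1⟩⟩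
    have := h2 a
    simp only [mem_union] at this ⊢
    tauto

/-- a tiling with `q` copies avoiding the box `W` -/
def Til (V1 V2 V3 : Finset V) (q : ℕ) (W1 W2 W3 : Finset V) : Prop :=
  W1 ⊆ V1 ∧ W2 ⊆ V2 ∧ W3 ⊆ V3 ∧ ∃ gs : Fin q → Fin 8 → V,
      (∀ i, IsMCopy H (gs i)) ∧
      (∀ i j, i ≠ j → ∀ a b, gs i a ≠ gs j b) ∧
      (∀ i a, gs i a ∈ V1 ∪ V2 ∪ V3) ∧
      (∀ i, ∀ e ∈ MCopyEdges (gs i),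
        (e ∩ V1).card = 1 ∧ (e ∩ V2).card = 1 ∧ (e ∩ V3).card = 1) ∧
      (∀ i a, gs i a ∉ W1 ∪ W2 ∪ W3)

lemma Til.zero (V1 V2 V3 : Finset V) : Til H V1 V2 V3 0 V1 V2 V3 :=
  ⟨Subset.rfl, Subset.rfl, Subset.rfl, fun i => i.elim0, fun i => i.elim0, fun i => i.elim0,
    fun i => i.elim0, fun i => i.elim0, fun i => i.elim0⟩

lemma Til.step {V1 V2 V3 : Finset V} (h12 : Disjoint V1 V2) (h13 : Disjoint V1 V3)
    (h23 : Disjoint V2 V3) {q : ℕ} {W1 W2 W3 X1 X2 X3 : Finset V} (h : Til H V1 V2 V3 q W1 W2 W3)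
    (hX1 : X1 ⊆ W1) (hX2 : X2 ⊆ W2) (hX3 : X3 ⊆ W3) (hM : AnyM H X1 X2 X3) :
    Til H V1 V2 V3 (q + 1) (W1 \ X1) (W2 \ X2) (W3 \ X3) := by
  obtain ⟨w1, w2, w3, gs, g1, g2, g3, g4, g5⟩ := h
  obtain ⟨g, c1, c2, c3⟩ := hM.copy H (hX1.trans w1) (hX2.trans w2) (hX3.trans w3) h12 h13 h23
  have hX : X1 ∪ X2 ∪ X3 ⊆ W1 ∪ W2 ∪ W3 := union_subset_union (union_subset_union hX1 hX2) hX3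
  have hW : W1 ∪ W2 ∪ W3 ⊆ V1 ∪ V2 ∪ V3 := union_subset_union (union_subset_union w1 w2) w3
  refine ⟨sdiff_subset.trans w1, sdiff_subset.trans w2, sdiff_subset.trans w3,
    Fin.cons g gs, ?_, ?_, ?_, ?_, ?_⟩
  · intro i
    refine Fin.cases ?_ (fun i => ?_) i
    · simpa using c1
    · simpa using g1 i
  · intro i j
    refine Fin.cases ?_ (fun i => ?_) i
    · refine Fin.cases ?_ (fun j => ?_) j
      · intro h; exact absurd rfl h
      · intro _ a b
        simp only [Fin.cons_zero, Fin.cons_succ]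
        intro h
        exact g5 j b (h ▸ hX (c2 a))
    · refine Fin.cases ?_ (fun j => ?_) j
      · intro _ a b
        simp only [Fin.cons_zero, Fin.cons_succ]
        intro h
        exact g5 i a (h ▸ hX (c2 b))
      · intro h a b
        simp only [Fin.cons_succ]
        exact g2 i j (fun hh => h (by rw [hh])) a b
  · intro i a
    refine Fin.cases ?_ (fun i => ?_) i
    · simpa using hW (hX (c2 a))
    · simpa using g3 i a
  · intro i
    refine Fin.cases ?_ (fun i => ?_) i
    · simpa using c3
    · simpa using g4 i
  · intro i a
    refine Fin.cases ?_ (fun i => ?_) i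
    · simp only [Fin.cons_zero]
      have hw : g a ∈ V1 ∪ V2 ∪ V3 := hW (hX (c2 a))
      have hx := c2 a
      intro h
      simp only [mem_union, mem_sdiff] at hx h
      have d1 := @hX1 (g a)
      have d2 := @hX2 (g a)
      have d3 := @hX3 (g a)
      have e1 := @w1 (g a)
      have e2 := @w2 (g a)
      have e3 := @w3 (g a)
      have f1 : g a ∈ V1 → g a ∉ V2 := fun h => disjoint_left.1 h12 h
      have f2 : g a ∈ V1 → g a ∉ V3 := fun h => disjoint_left.1 h13 h
      have f3 : g a ∈ V2 → g a ∉ V3 := fun h => disjoint_left.1 h23 h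
      clear hw g1 g2 g3 g4 g5 c1 c2 c3
      rcases hx with (hx | hx) | hx <;> rcases h with (h | h) | h
      · exact h.2 hx
      · exact f1 (e1 (d1 hx)) (e2 h.1)
      · exact f2 (e1 (d1 hx)) (e3 h.1)
      · exact f1 (e1 h.1) (e2 (d2 hx))
      · exact h.2 hx
      · exact f3 (e2 (d2 hx)) (e3 h.1)
      · exact f2 (e1 h.1) (e3 (d3 hx))
      · exact f3 (e2 h.1) (e3 (d3 hx))
      · exact h.2 hx
    · simp only [Fin.cons_succ]
      intro h
      refine g5 i a (union_subset_union (union_subset_union ?_ ?_) ?_ h) <;> exact sdiff_subset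

lemma Til.final {V1 V2 V3 : Finset V} (h12 : Disjoint V1 V2) (h13 : Disjoint V1 V3)
    (h23 : Disjoint V2 V3) {N : ℕ} {W1 W2 W3 : Finset V} (h : Til H V1 V2 V3 N W1 W2 W3)
    (c : ℝ) (hc : (V1.card : ℝ) + V2.card + V3.card - 8 * N ≤ c) :
    ∃ (q : ℕ) (gs : Fin q → Fin 8 → V),
      (∀ i, IsMCopy H (gs i)) ∧
      (∀ i j, i ≠ j → ∀ a b, gs i a ≠ gs j b) ∧
      (∀ i a, gs i a ∈ V1 ∪ V2 ∪ V3) ∧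
      (∀ i, ∀ e ∈ MCopyEdges (gs i),
        (e ∩ V1).card = 1 ∧ (e ∩ V2).card = 1 ∧ (e ∩ V3).card = 1) ∧
      ((((V1 ∪ V2 ∪ V3) \ Finset.univ.biUnion fun i => Finset.univ.image (gs i)).card : ℝ)
        ≤ c) := by
  obtain ⟨w1, w2, w3, gs, g1, g2, g3, g4, g5⟩ := h
  refine ⟨N, gs, g1, g2, g3, g4, ?_⟩
  have hsub : (Finset.univ.biUnion fun i => Finset.univ.image (gs i)) ⊆ V1 ∪ V2 ∪ V3 := by
    intro a ha
    simp only [mem_biUnion, mem_univ, mem_image, true_and] at ha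
    obtain ⟨i, j, rfl⟩ := ha
    exact g3 i j
  have hcard : (Finset.univ.biUnion fun i => Finset.univ.image (gs i)).card = N * 8 := by
    rw [card_biUnion]
    · rw [sum_congr rfl (fun i _ => card_image_of_injective univ (g1 i).1)]
      simp
    · intro i _ j _ hij
      rw [Function.onFun, disjoint_left]
      intro a ha hb
      simp only [mem_univ, mem_image, true_and] at ha hb
      obtain ⟨x, rfl⟩ := ha
      obtain ⟨y, hy⟩ := hb
      exact g2 i j hij x y hy.symm
  have hV : (V1 ∪ V2 ∪ V3).card = V1.card + V2.card + V3.card := by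
    rw [card_union_of_disjoint (disjoint_union_left.2 ⟨h13, h23⟩), card_union_of_disjoint h12]
  have := card_sdiff_add_card_eq_card hsub
  rw [hcard, hV] at this
  have h' : ((((V1 ∪ V2 ∪ V3) \ Finset.univ.biUnion fun i => Finset.univ.image (gs i)).card : ℝ)
    + N * 8) = V1.card + V2.card + V3.card := by exact_mod_cast this
  linarith

lemma reach {V1 V2 V3 : Finset V} (h12 : Disjoint V1 V2) (h13 : Disjoint V1 V3)
    (h23 : Disjoint V2 V3) (n1 n2 n3 : ℕ) :
    ∀ (s t1 t2 t3 q : ℕ) (W1 W2 W3 : Finset V), s = t1 + t2 + t3 →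
    Til H V1 V2 V3 q W1 W2 W3 →
    W1.card = n1 + 2 * t1 + 3 * t2 + 3 * t3 → W2.card = n2 + 3 * t1 + 2 * t2 + 3 * t3 →
    W3.card = n3 + 3 * t1 + 3 * t2 + 2 * t3 →
    (t1 ≠ 0 → ∀ A B C, A ⊆ V1 → B ⊆ V2 → C ⊆ V3 → n1 + 2 ≤ A.card → n2 + 2 ≤ B.card →
      n3 + 2 ≤ C.card → Mc H A B C) →
    (t2 ≠ 0 → ∀ A B C, A ⊆ V1 → B ⊆ V2 → C ⊆ V3 → n1 + 2 ≤ A.card → n2 + 2 ≤ B.card →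
      n3 + 2 ≤ C.card → Mc H B A C) →
    (t3 ≠ 0 → ∀ A B C, A ⊆ V1 → B ⊆ V2 → C ⊆ V3 → n1 + 2 ≤ A.card → n2 + 2 ≤ B.card →
      n3 + 2 ≤ C.card → Mc H C A B) →
    ∃ U1 U2 U3, Til H V1 V2 V3 (q + s) U1 U2 U3 ∧ U1.card = n1 ∧ U2.card = n2 ∧ U3.card = n3 := by
  intro s
  induction s with
  | zero =>
    intro t1 t2 t3 q W1 W2 W3 hs hT c1 c2 c3 _ _ _
    exact ⟨W1, W2, W3, hT, by omega, by omega, by omega⟩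
  | succ s ih =>
    intro t1 t2 t3 q W1 W2 W3 hs hT c1 c2 c3 p1 p2 p3
    have key : ∃ X1 X2 X3 t1' t2' t3', X1 ⊆ W1 ∧ X2 ⊆ W2 ∧ X3 ⊆ W3 ∧ AnyM H X1 X2 X3 ∧
        s = t1' + t2' + t3' ∧ t1' ≤ t1 ∧ t2' ≤ t2 ∧ t3' ≤ t3 ∧
        (W1 \ X1).card = n1 + 2 * t1' + 3 * t2' + 3 * t3' ∧
        (W2 \ X2).card = n2 + 3 * t1' + 2 * t2' + 3 * t3' ∧
        (W3 \ X3).card = n3 + 3 * t1' + 3 * t2' + 2 * t3' := by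
      by_cases ht1 : t1 ≠ 0
      · obtain ⟨X, Y, Z, hX, hY, hZ, cX, cY, cZ, hM⟩ := Mc.shrink H
          (p1 ht1 W1 W2 W3 hT.1 hT.2.1 hT.2.2.1 (by omega) (by omega) (by omega))
        have dX := card_sdiff_add_card_eq_card hX
        have dY := card_sdiff_add_card_eq_card hY
        have dZ := card_sdiff_add_card_eq_card hZ
        exact ⟨X, Y, Z, t1 - 1, t2, t3, hX, hY, hZ, Or.inl hM, by omega, by omega, by omega,
          by omega, by omega, by omega, by omega⟩
      by_cases ht2 : t2 ≠ 0
      · obtain ⟨Y, X, Z, hY, hX, hZ, cY, cX, cZ, hM⟩ := Mc.shrink H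
          (p2 ht2 W1 W2 W3 hT.1 hT.2.1 hT.2.2.1 (by omega) (by omega) (by omega))
        have dX := card_sdiff_add_card_eq_card hX
        have dY := card_sdiff_add_card_eq_card hY
        have dZ := card_sdiff_add_card_eq_card hZ
        exact ⟨X, Y, Z, t1, t2 - 1, t3, hX, hY, hZ, Or.inr (Or.inl hM), by omega, by omega,
          by omega, by omega, by omega, by omega, by omega⟩
      have ht3 : t3 ≠ 0 := by omega
      obtain ⟨Z, X, Y, hZ, hX, hY, cZ, cX, cY, hM⟩ := Mc.shrink H
        (p3 ht3 W1 W2 W3 hT.1 hT.2.1 hT.2.2.1 (by omega) (by omega) (by omega))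
      have dX := card_sdiff_add_card_eq_card hX
      have dY := card_sdiff_add_card_eq_card hY
      have dZ := card_sdiff_add_card_eq_card hZ
      exact ⟨X, Y, Z, t1, t2, t3 - 1, hX, hY, hZ, Or.inr (Or.inr hM), by omega, by omega,
        by omega, by omega, by omega, by omega, by omega⟩
    obtain ⟨X1, X2, X3, t1', t2', t3', hX1, hX2, hX3, hM, hs', l1, l2, l3, d1, d2, d3⟩ := key
    obtain ⟨U1, U2, U3, hU⟩ := ih t1' t2' t3' (q + 1) _ _ _ hs' (hT.step H h12 h13 h23 hX1 hX2 hX3 hM) d1 d2 d3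
      (fun h => p1 (by omega)) (fun h => p2 (by omega)) (fun h => p3 (by omega))
    refine ⟨U1, U2, U3, ?_⟩
    rw [show q + (s + 1) = q + 1 + s by ring]
    exact hU

end

open Finset

section
variable {V : Type} [DecidableEq V] (H : Finset (Finset V))

lemma quality {A B C : Finset V} {ε s : ℝ} (hs : 0 < s) (hεs : 7 / 2 < ε * s)
    (hA : 0 < A.card) (hB : 0 < B.card) (hC : 0 < C.card)
    (hcnt : ε * ((A.card : ℝ) * B.card * C.card) ≤ cnt H A B C)
    (h1 : s * (B.card + 2 * A.card) ≤ 7 / 2 * ((A.card : ℝ) * B.card))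
    (h2 : s * (C.card + 2 * A.card) ≤ 7 / 2 * ((A.card : ℝ) * C.card)) : Mc H A B C := by
  have hA' : (0 : ℝ) < A.card := by exact_mod_cast hA
  have hB' : (0 : ℝ) < B.card := by exact_mod_cast hB
  have hC' : (0 : ℝ) < C.card := by exact_mod_cast hC
  have gen : ∀ a b : ℝ, 0 < a → 0 < b → s * (b + 2 * a) ≤ 7 / 2 * (a * b) →
      b + 2 * a < ε * (a * b) := by
    intro a b ha hb h
    have hab : 0 < a * b := mul_pos ha hb
    have : s * (b + 2 * a) < s * (ε * (a * b)) := by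
      calc _ ≤ _ := h
        _ < (ε * s) * (a * b) := by nlinarith
        _ = _ := by ring
    exact lt_of_mul_lt_mul_left this hs.le
  rcases le_total B.card C.card with hbc | hbc
  · apply type_lemma H A B C C.card hbc le_rfl
    have := gen _ _ hA' hB' h1
    have h3 : ((B.card * C.card + 2 * A.card * C.card : ℕ) : ℝ) < cnt H A B C := by
      push_cast
      nlinarith
    exact_mod_cast h3
  · apply type_lemma H A B C B.card le_rfl hbc
    have := gen _ _ hA' hC' h2
    have h3 : ((B.card * C.card + 2 * A.card * B.card : ℕ) : ℝ) < cnt H A B C := by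
      push_cast
      nlinarith
    exact_mod_cast h3

lemma q_third {a b s : ℝ} (hs : 0 < s) (ha : 2 / 3 * s ≤ a) (hb : s ≤ b) :
    s * (b + 2 * a) ≤ 7 / 2 * (a * b) := by
  nlinarith [mul_le_mul_of_nonneg_right ha (by linarith : 0 ≤ b),
    mul_le_mul_of_nonneg_right hb (by linarith : 0 ≤ a)]

lemma q_second {a b s : ℝ} (hs : 0 < s) (ha : 5 / 6 * s ≤ a) (hb : 7 / 8 * s ≤ b) :
    s * (b + 2 * a) ≤ 7 / 2 * (a * b) := by
  nlinarith [mul_le_mul_of_nonneg_right ha (by linarith : 0 ≤ b),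
    mul_le_mul_of_nonneg_right hb (by linarith : 0 ≤ a), mul_pos (by linarith : 0 < a) (by linarith : 0 < b)]

lemma q_fourth {a b s : ℝ} (hs : 0 < s) (ha : s ≤ a) (hb : 5 / 6 * s ≤ b) :
    s * (b + 2 * a) ≤ 7 / 2 * (a * b) := by
  nlinarith [mul_le_mul_of_nonneg_right ha (by linarith : 0 ≤ b),
    mul_le_mul_of_nonneg_right hb (by linarith : 0 ≤ a), mul_pos (by linarith : 0 < a) (by linarith : 0 < b)]

/-- lower regularity -/
def LReg (ε : ℝ) (V1 V2 V3 : Finset V) : Prop :=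
  ∀ A B C : Finset V, A ⊆ V1 → B ⊆ V2 → C ⊆ V3 → ε * V1.card ≤ A.card → ε * V2.card ≤ B.card →
    ε * V3.card ≤ C.card → ε * ((A.card : ℝ) * B.card * C.card) ≤ cnt H A B C

variable {ε s : ℝ} {V1 V2 V3 : Finset V}

lemma ty3 (hs : 0 < s) (hεs : 7 / 2 < ε * s) (hL : LReg H ε V1 V2 V3)
    {A B C : Finset V} (hA : A ⊆ V1) (hB : B ⊆ V2) (hC : C ⊆ V3) (cA : ε * V1.card ≤ A.card)
    (cB : ε * V2.card ≤ B.card) (cC : ε * V3.card ≤ C.card)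
    (a1 : s ≤ A.card) (b1 : 5 / 6 * s ≤ B.card) (c1 : 2 / 3 * s ≤ C.card)
    (bc : s ≤ B.card ∨ 15 / 8 * s ≤ B.card + C.card) : Mc H C A B := by
  have h := hL A B C hA hB hC cA cB cC
  have pA : (0 : ℝ) < A.card := by linarith
  have pB : (0 : ℝ) < B.card := by linarith
  have pC : (0 : ℝ) < C.card := by linarith
  apply quality H hs hεs (by exact_mod_cast pC) (by exact_mod_cast pA) (by exact_mod_cast pB)
  · rw [cnt_swap12, cnt_swap23]
    calc _ = _ := by ring
      _ ≤ _ := h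
  · exact q_third hs c1 a1
  · by_cases h1 : s ≤ B.card
    · exact q_third hs c1 h1
    replace bc := bc.resolve_left h1
    by_cases h2 : 7 / 8 * s ≤ B.card
    · exact q_second hs (by linarith) h2
    · exact q_fourth hs (by linarith) b1

lemma ty2 (hs : 0 < s) (hεs : 7 / 2 < ε * s) (hL : LReg H ε V1 V2 V3)
    {A B C : Finset V} (hA : A ⊆ V1) (hB : B ⊆ V2) (hC : C ⊆ V3) (cA : ε * V1.card ≤ A.card)
    (cB : ε * V2.card ≤ B.card) (cC : ε * V3.card ≤ C.card)
    (a1 : s ≤ A.card) (b1 : 5 / 6 * s ≤ B.card) (c1 : 7 / 8 * s ≤ C.card) : Mc H B A C := by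
  have h := hL A B C hA hB hC cA cB cC
  have pA : (0 : ℝ) < A.card := by linarith
  have pB : (0 : ℝ) < B.card := by linarith
  have pC : (0 : ℝ) < C.card := by linarith
  apply quality H hs hεs (by exact_mod_cast pB) (by exact_mod_cast pA) (by exact_mod_cast pC)
  · rw [cnt_swap12]
    calc _ = _ := by ring
      _ ≤ _ := h
  · exact q_third hs (by linarith) a1
  · exact q_second hs b1 c1

lemma ty1 (hs : 0 < s) (hεs : 7 / 2 < ε * s) (hL : LReg H ε V1 V2 V3)
    {A B C : Finset V} (hA : A ⊆ V1) (hB : B ⊆ V2) (hC : C ⊆ V3) (cA : ε * V1.card ≤ A.card)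
    (cB : ε * V2.card ≤ B.card) (cC : ε * V3.card ≤ C.card)
    (a1 : s ≤ A.card) (b1 : s ≤ B.card) (c1 : s ≤ C.card) : Mc H A B C := by
  have h := hL A B C hA hB hC cA cB cC
  have pA : (0 : ℝ) < A.card := by linarith
  have pB : (0 : ℝ) < B.card := by linarith
  have pC : (0 : ℝ) < C.card := by linarith
  exact quality H hs hεs (by exact_mod_cast pA) (by exact_mod_cast pB) (by exact_mod_cast pC) h
    (q_third hs (by linarith) b1) (q_third hs (by linarith) c1)

end

open Finset

section
variable {V : Type} [DecidableEq V] (H : Finset (Finset V))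

lemma type_real (A B C : Finset V) (M : ℕ) (hB : B.card ≤ M) (hC : C.card ≤ M)
    (h : (B.card : ℝ) * C.card + 2 * A.card * M < cnt H A B C) : Mc H A B C :=
  type_lemma H A B C M hB hC (by exact_mod_cast h)

lemma finish_two {R Q F : Finset V} {w w' u p p' v q : V} (hw : w ∈ F) (hw' : w' ∈ F)
    (hu : u ∈ R) (hp : p ∈ R) (hp' : p' ∈ R) (hv : v ∈ Q) (hq : q ∈ Q)
    (hww : w ≠ w') (hup : u ≠ p) (hup' : u ≠ p') (hpp' : p ≠ p') (hvq : v ≠ q)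
    (e1 : ({w, u, v} : Finset V) ∈ H) (e2 : ({w', u, v} : Finset V) ∈ H)
    (e3 : ({w, p, q} : Finset V) ∈ H) (S : Finset V) (hS : S ⊆ Q) (hSc : 5 ≤ S.card)
    (e4 : ∀ z ∈ S, ({w', p', z} : Finset V) ∈ H)
    (hM : Mc H (Q \ {v, q}) (R \ {u, p, p'}) (F \ {w, w'})) : Two H R Q F := by
  obtain ⟨XQ, XR, XF, hXQ, hXR, hXF, cQ, cR, cF, hM'⟩ := Mc.shrink H hM
  obtain ⟨q', hq'⟩ : (S \ ({v, q} ∪ XQ)).Nonempty := by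
    rw [← card_pos]
    have h1 := le_card_sdiff ({v, q} ∪ XQ) S
    have h2 := card_union_le ({v, q} : Finset V) XQ
    have h3 : ({v, q} : Finset V).card ≤ 2 := card_le_two
    omega
  simp only [mem_sdiff, mem_union, mem_insert, mem_singleton, not_or] at hq'
  obtain ⟨hq'S, ⟨hq'v, hq'q⟩, hq'X⟩ := hq'
  have nQ : ∀ a ∈ XQ, a ≠ v ∧ a ≠ q := by
    intro a ha
    have := hXQ ha
    simp only [mem_sdiff, mem_insert, mem_singleton, not_or] at this
    exact this.2
  have nR : ∀ a ∈ XR, a ≠ u ∧ a ≠ p ∧ a ≠ p' := by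
    intro a ha
    have := hXR ha
    simp only [mem_sdiff, mem_insert, mem_singleton, not_or] at this
    exact this.2
  have nF : ∀ a ∈ XF, a ≠ w ∧ a ≠ w' := by
    intro a ha
    have := hXF ha
    simp only [mem_sdiff, mem_insert, mem_singleton, not_or] at this
    exact this.2
  refine ⟨XR, XQ, XF, hXR.trans sdiff_subset, hXQ.trans sdiff_subset, hXF.trans sdiff_subset,
    Or.inr (Or.inl hM'), Or.inr (Or.inr ?_)⟩
  have mw : w ∈ F \ XF := mem_sdiff.2 ⟨hw, fun h => (nF _ h).1 rfl⟩
  have mw' : w' ∈ F \ XF := mem_sdiff.2 ⟨hw', fun h => (nF _ h).2 rfl⟩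
  have mu : u ∈ R \ XR := mem_sdiff.2 ⟨hu, fun h => (nR _ h).1 rfl⟩
  have mp : p ∈ R \ XR := mem_sdiff.2 ⟨hp, fun h => (nR _ h).2.1 rfl⟩
  have mp' : p' ∈ R \ XR := mem_sdiff.2 ⟨hp', fun h => (nR _ h).2.2 rfl⟩
  have mv : v ∈ Q \ XQ := mem_sdiff.2 ⟨hv, fun h => (nQ _ h).1 rfl⟩
  have mq : q ∈ Q \ XQ := mem_sdiff.2 ⟨hq, fun h => (nQ _ h).2 rfl⟩
  have mq' : q' ∈ Q \ XQ := mem_sdiff.2 ⟨hS hq'S, hq'X⟩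
  exact ⟨w, mw, w', mw', u, mu, p, mp, p', mp', v, mv, q, mq, q', mq', hww, hup, hup', hpp', hvq,
    fun h => hq'v h.symm, fun h => hq'q h.symm, (mem_lk H).2 ⟨⟨mu, mv⟩, e1⟩,
    (mem_lk H).2 ⟨⟨mu, mv⟩, e2⟩, (mem_lk H).2 ⟨⟨mp, mq⟩, e3⟩, (mem_lk H).2 ⟨⟨mp', mq'⟩, e4 _ hq'S⟩⟩

lemma core_cells {B Q : Finset V} {w w' : V} {c : V × V} (hc : c ∈ lk H B Q w)
    (hc' : c ∈ lk H B Q w') (h1 : Q.card + 4 * B.card < (lk H B Q w').card + 4)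
    (h2 : 2 * Q.card + B.card < (lk H B Q w).card) :
    ∃ u ∈ B, ∃ p ∈ B, ∃ p' ∈ B, ∃ v ∈ Q, ∃ q ∈ Q, u ≠ p ∧ u ≠ p' ∧ p ≠ p' ∧ v ≠ q ∧
      ({w, u, v} : Finset V) ∈ H ∧ ({w', u, v} : Finset V) ∈ H ∧ ({w, p, q} : Finset V) ∈ H ∧
      ∃ S ⊆ Q, 5 ≤ S.card ∧ ∀ z ∈ S, ({w', p', z} : Finset V) ∈ H := by
  rw [mem_lk] at hc hc'
  have hrow : ∃ p' ∈ B.erase c.1, 5 ≤ (Q.filter (fun z => ({w', p', z} : Finset V) ∈ H)).card := by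
    by_contra hcon
    push Not at hcon
    have e : (lk H B Q w').card = ∑ y ∈ B, (Q.filter (fun z => ({w', y, z} : Finset V) ∈ H)).card := by
      rw [lk, card_filter, sum_product]
      refine sum_congr rfl fun y _ => ?_
      rw [card_filter]
    rw [← add_sum_erase _ _ hc.1.1] at e
    have s1 : ∑ y ∈ B.erase c.1, (Q.filter (fun z => ({w', y, z} : Finset V) ∈ H)).card ≤
        (B.erase c.1).card * 4 := by
      rw [← smul_eq_mul]
      apply sum_le_card_nsmul
      intro y hy
      have := hcon y hy
      omega
    have s2 : (Q.filter (fun z => ({w', c.1, z} : Finset V) ∈ H)).card ≤ Q.card :=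
      card_le_card (filter_subset _ _)
    have s3 := card_erase_add_one hc.1.1
    omega
  obtain ⟨p', hp', hS⟩ := hrow
  rw [mem_erase] at hp'
  obtain ⟨a, ha, ha1, ha2⟩ := avoid_lines B Q (lk H B Q w) (lk_sub H B Q w) {c.1, p'} {c.2} (by
    have : ({c.1, p'} : Finset V).card ≤ 2 := card_le_two
    rw [card_singleton]
    nlinarith)
  rw [mem_lk] at ha
  simp only [mem_insert, mem_singleton, not_or] at ha1 ha2
  exact ⟨c.1, hc.1.1, a.1, ha.1.1, p', hp'.2, c.2, hc.1.2, a.2, ha.1.2, fun h => ha1.1 h.symm,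
    hp'.1.symm, ha1.2, fun h => ha2 h.symm, hc.2, hc'.2, ha.2, _, filter_subset _ _, hS,
    fun z hz => (mem_filter.1 hz).2⟩

/-- all k-boxes are dense -/
def KB (k : ℕ) (e0 : ℝ) (U1 U2 U3 : Finset V) : Prop :=
  ∀ A B C : Finset V, A ⊆ U1 → B ⊆ U2 → C ⊆ U3 → A.card = k → B.card = k → C.card = k →
    e0 ≤ cnt H A B C

variable {k : ℕ} {e0 : ℝ} {U1 U2 U3 : Finset V}

lemma KB.s12 (h : KB H k e0 U1 U2 U3) : KB H k e0 U2 U1 U3 := by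
  intro A B C hA hB hC cA cB cC
  rw [cnt_swap12]; exact h B A C hB hA hC cB cA cC

lemma KB.s23 (h : KB H k e0 U1 U2 U3) : KB H k e0 U1 U3 U2 := by
  intro A B C hA hB hC cA cB cC
  rw [cnt_swap23]; exact h A C B hA hC hB cA cC cB

lemma KB.mc (h : KB H k e0 U1 U2 U3) (he : 3 * (k : ℝ) ^ 2 < e0) {A B C : Finset V} (hA : A ⊆ U1)
    (hB : B ⊆ U2) (hC : C ⊆ U3) (cA : k ≤ A.card) (cB : k ≤ B.card) (cC : k ≤ C.card) :
    Mc H A B C := by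
  obtain ⟨A', hA', cA'⟩ := exists_subset_card_eq cA
  obtain ⟨B', hB', cB'⟩ := exists_subset_card_eq cB
  obtain ⟨C', hC', cC'⟩ := exists_subset_card_eq cC
  apply Mc.mono H hA' hB' hC'
  apply type_real H A' B' C' k cB'.le cC'.le
  have := h A' B' C' (hA'.trans hA) (hB'.trans hB) (hC'.trans hC) cA' cB' cC'
  rw [cA', cB', cC']
  nlinarith

lemma cnt_insert (A B C : Finset V) {x : V} (hx : x ∉ A) :
    cnt H (insert x A) B C = (lk H B C x).card + cnt H A B C := by
  rw [cnt, sum_insert hx, cnt]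

lemma two_of_three {X : Finset V} (hX : X.card = 3) : ∃ a ∈ X, ∃ b ∈ X, ∃ c ∈ X,
    a ≠ b ∧ a ≠ c ∧ b ≠ c := by
  obtain ⟨a, b, c, h1, h2, h3, rfl⟩ := card_eq_three.1 hX
  exact ⟨a, by simp, b, by simp, c, by simp, h1, h2, h3⟩

lemma share {B C : Finset V} {L L' : Finset (V × V)} (hL : L ⊆ B ×ˢ C) (hL' : L' ⊆ B ×ˢ C)
    (h : B.card * C.card < L.card + L'.card) : ∃ c ∈ L, c ∈ L' := by
  by_contra hcon
  push Not at hcon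
  have hd : Disjoint L L' := disjoint_left.2 hcon
  have := card_le_card (union_subset hL hL')
  rw [card_union_of_disjoint hd, card_product] at this
  omega

lemma def1_two (hk : 6 ≤ k) (hKB : KB H k e0 U1 U2 U3)
    (he : 21 * (k : ℝ) ^ 3 < 2 * (3 * k - 1) * e0)
    (c1 : U1.card = k + 3) (c2 : U2.card = k + 2) (c3 : U3.card = k + 2) : Two H U1 U2 U3 := by
  have hkR : (6 : ℝ) ≤ k := by exact_mod_cast hk
  have he0 : 7 / 2 * (k : ℝ) ^ 2 + 7 / 6 * k < e0 := by
    by_contra hcon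
    push Not at hcon
    have := mul_le_mul_of_nonneg_left hcon (by linarith : (0 : ℝ) ≤ 2 * (3 * k - 1))
    nlinarith
  have he3 : 3 * (k : ℝ) ^ 2 < e0 := by nlinarith
  obtain ⟨X2, X1, X3, hX2, hX1, hX3, d2, d1, d3, hM⟩ := Mc.shrink H
    (KB.mc H (KB.s12 H hKB) he3 (Subset.refl U2) (Subset.refl U1) (Subset.refl U3) (by omega) (by omega) (by omega))
  have f1 := card_sdiff_add_card_eq_card hX1
  have f2 := card_sdiff_add_card_eq_card hX2
  have f3 := card_sdiff_add_card_eq_card hX3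
  by_cases hB : Mc H (U3 \ X3) (U1 \ X1) (U2 \ X2)
  · exact ⟨X1, X2, X3, hX1, hX2, hX3, Or.inr (Or.inl hM), Or.inr (Or.inr hB)⟩
  have g1 : ((U1 \ X1).card : ℝ) = k := by exact_mod_cast (by omega : (U1 \ X1).card = k)
  have g2 : ((U2 \ X2).card : ℝ) = k := by exact_mod_cast (by omega : (U2 \ X2).card = k)
  have g3 : ((U3 \ X3).card : ℝ) + 1 = k := by exact_mod_cast (by omega : (U3 \ X3).card + 1 = k)
  have hcnt : (cnt H (U3 \ X3) (U1 \ X1) (U2 \ X2) : ℝ) ≤ 3 * k ^ 2 - 2 * k := by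
    by_contra hcon
    push Not at hcon
    apply hB
    apply type_real H _ _ _ k (by omega) (by omega)
    rw [g1, g2, show ((U3 \ X3).card : ℝ) = k - 1 by linarith]
    nlinarith
  have hbig : ∀ w ∈ X3, 5 * k < (lk H (U1 \ X1) (U2 \ X2) w).card ∧
      k * k < 2 * (lk H (U1 \ X1) (U2 \ X2) w).card := by
    intro w hw
    have hwn : w ∉ U3 \ X3 := fun h => (mem_sdiff.1 h).2 hw
    have h1 := hKB (U1 \ X1) (U2 \ X2) (insert w (U3 \ X3)) sdiff_subset sdiff_subset
      (insert_subset (hX3 hw) sdiff_subset) (by omega) (by omega)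
      (by rw [card_insert_of_notMem hwn]; omega)
    rw [cnt_swap23, cnt_swap12, cnt_insert H _ _ _ hwn] at h1
    push_cast at h1
    constructor
    · have : (5 * k : ℝ) < (lk H (U1 \ X1) (U2 \ X2) w).card := by nlinarith
      exact_mod_cast this
    · have : (k * k : ℝ) < 2 * (lk H (U1 \ X1) (U2 \ X2) w).card := by nlinarith
      exact_mod_cast this
  obtain ⟨w, hw, w', hw', -, -, hne, -, -⟩ := two_of_three d3
  have bw := hbig w hw
  have bw' := hbig w' hw'
  have gg1 : (U1 \ X1).card = k := by omega
  have gg2 : (U2 \ X2).card = k := by omega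
  obtain ⟨c, hc, hc'⟩ := share (lk_sub H (U1 \ X1) (U2 \ X2) w) (lk_sub H (U1 \ X1) (U2 \ X2) w')
    (by rw [gg1, gg2]; omega)
  obtain ⟨u, hu, p, hp, p', hp', v, hv, q, hq, n1, n2, n3, n4, e1, e2, e3, S, hS, hSc, e4⟩ :=
    core_cells H hc hc' (by omega) (by omega)
  have sd : ∀ {A B : Finset V} {a : V}, a ∈ A \ B → a ∈ A := fun h => (mem_sdiff.1 h).1
  refine finish_two H (hX3 hw) (hX3 hw') (sd hu) (sd hp) (sd hp') (sd hv) (sd hq) hne n1 n2 n3 n4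
    e1 e2 e3 S (hS.trans sdiff_subset) hSc e4 ?_
  apply KB.mc H (KB.s12 H hKB) he3 sdiff_subset sdiff_subset sdiff_subset
  · have := le_card_sdiff ({v, q} : Finset V) U2
    have h : ({v, q} : Finset V).card ≤ 2 := card_le_two
    omega
  · have := le_card_sdiff ({u, p, p'} : Finset V) U1
    have h : ({u, p, p'} : Finset V).card ≤ 3 := card_le_three
    omega
  · have := le_card_sdiff ({w, w'} : Finset V) U3
    have h : ({w, w'} : Finset V).card ≤ 2 := card_le_two
    omega

end

open Finset

section
variable {V : Type} [DecidableEq V] (H : Finset (Finset V))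
variable {k : ℕ} {e0 : ℝ} {U1 U2 U3 : Finset V}

lemma share3 {B C : Finset V} {L1 L2 L3 : Finset (V × V)} (h1 : L1 ⊆ B ×ˢ C) (h2 : L2 ⊆ B ×ˢ C)
    (h3 : L3 ⊆ B ×ˢ C) (h : B.card * C.card < L1.card + L2.card + L3.card) :
    (∃ c ∈ L1, c ∈ L2) ∨ (∃ c ∈ L1, c ∈ L3) ∨ (∃ c ∈ L2, c ∈ L3) := by
  by_contra hcon
  push Not at hcon
  obtain ⟨n1, n2, n3⟩ := hcon
  have d1 : Disjoint L1 L2 := disjoint_left.2 n1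
  have d2 : Disjoint (L1 ∪ L2) L3 := disjoint_union_left.2 ⟨disjoint_left.2 n2, disjoint_left.2 n3⟩
  have := card_le_card (union_subset (union_subset h1 h2) h3)
  rw [card_union_of_disjoint d2, card_union_of_disjoint d1, card_product] at this
  omega

lemma lk_restrict {Y Z Y' Z' : Finset V} (hY : Y' ⊆ Y) (hZ : Z' ⊆ Z) (x : V) :
    (lk H Y Z x).card + Y'.card * Z'.card ≤ (lk H Y' Z' x).card + Y.card * Z.card := by
  have h1 : lk H Y Z x ⊆ lk H Y' Z' x ∪ ((Y ×ˢ Z) \ (Y' ×ˢ Z')) := by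
    intro c hc
    rw [mem_lk] at hc
    rw [mem_union, mem_lk, mem_sdiff, mem_product, mem_product]
    tauto
  have h2 := (card_le_card h1).trans (card_union_le _ _)
  have h3 := card_sdiff_add_card_eq_card (product_subset_product hY hZ)
  rw [card_product, card_product] at h3
  omega

lemma core2 (hk : 6 ≤ k) (hk' : k ≤ 35) (hKB : KB H k e0 U1 U2 U3)
    (he0 : 7 / 2 * (k : ℝ) ^ 2 + 7 / 3 * k + 14 / 9 < e0)
    (c1 : U1.card = k + 2) (c2 : U2.card = k + 2) (c3 : U3.card = k + 2)
    {X B Q : Finset V} (hX : X ⊆ U2) (hB : B ⊆ U1) (hQ : Q ⊆ U3) (cX : X.card = 3)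
    (cB : B.card = k) (cQ : Q.card + 1 = k)
    (hw : ∀ w ∈ X, e0 - 3 * k ^ 2 + 3 * k - 1 ≤ 2 * ((lk H B Q w).card : ℝ)) : Two H U1 U2 U3 := by
  have hkR : (6 : ℝ) ≤ k := by exact_mod_cast hk
  have hkR' : (k : ℝ) ≤ 35 := by exact_mod_cast hk'
  have he3 : 3 * (k : ℝ) ^ 2 < e0 := by nlinarith
  have hbig : ∀ w ∈ X, 5 * k < (lk H B Q w).card + 5 ∧ 2 * (k * Q.card) < 6 * (lk H B Q w).card := by
    intro w hwX
    have h1 := hw w hwX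
    have gQ : (Q.card : ℝ) + 1 = k := by exact_mod_cast cQ
    constructor
    · have : (5 * k : ℝ) < (lk H B Q w).card + 5 := by nlinarith
      exact_mod_cast this
    · have : (2 * (k * Q.card) : ℝ) < 6 * (lk H B Q w).card := by
        rw [show (Q.card : ℝ) = k - 1 by linarith]
        nlinarith
      exact_mod_cast this
  -- two of the three share a cell
  obtain ⟨w, hwX, w', hwX', hne, c, hc, hc'⟩ : ∃ w ∈ X, ∃ w' ∈ X, w ≠ w' ∧
      ∃ c ∈ lk H B Q w, c ∈ lk H B Q w' := by
    obtain ⟨a, ha, b, hb, c, hc, h1, h2, h3⟩ := two_of_three cX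
    have ba := hbig a ha
    have bb := hbig b hb
    have bc := hbig c hc
    rcases share3 (lk_sub H B Q a) (lk_sub H B Q b) (lk_sub H B Q c) (by rw [cB]; omega) with h | h | h
    · exact ⟨a, ha, b, hb, h1, h⟩
    · exact ⟨a, ha, c, hc, h2, h⟩
    · exact ⟨b, hb, c, hc, h3, h⟩
  have bw := hbig w hwX
  have bw' := hbig w' hwX'
  obtain ⟨u, hu, p, hp, p', hp', v, hv, q, hq, n1, n2, n3, n4, e1, e2, e3, S, hS, hSc, e4⟩ :=
    core_cells H hc hc' (by omega) (by omega)
  have cY : (U2 \ {w, w'}).card = k := by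
    have := card_sdiff_add_card_eq_card (s := {w, w'}) (t := U2)
      (by simp [insert_subset_iff, hX hwX, hX hwX'])
    rw [card_pair hne] at this
    omega
  have cZ : (U3 \ {v, q}).card = k := by
    have := card_sdiff_add_card_eq_card (s := {v, q}) (t := U3)
      (by simp [insert_subset_iff, hQ hv, hQ hq])
    rw [card_pair n4] at this
    omega
  set Y := U2 \ {w, w'} with hY
  set Z := U3 \ {v, q} with hZ
  have hYU : Y ⊆ U2 := sdiff_subset
  have hZU : Z ⊆ U3 := sdiff_subset
  by_cases hr : ∃ r ∈ ({u, p, p'} : Finset V), ((lk H Y Z r).card : ℝ) < e0 - (3 * k ^ 2 - k)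
  · obtain ⟨r, hr, hlt⟩ := hr
    have hrU : r ∈ U1 := by
      simp only [mem_insert, mem_singleton] at hr
      rcases hr with rfl | rfl | rfl
      · exact hB hu
      · exact hB hp
      · exact hB hp'
    have cA : (U1 \ {u, p, p'}).card + 1 = k := by
      have := card_sdiff_add_card_eq_card (s := {u, p, p'}) (t := U1)
        (by simp [insert_subset_iff, hB hu, hB hp, hB hp'])
      rw [card_eq_three.2 ⟨u, p, p', n1, n2, n3, rfl⟩] at this
      omega
    have hrn : r ∉ U1 \ {u, p, p'} := fun h => (mem_sdiff.1 h).2 hr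
    have h1 := hKB (insert r (U1 \ {u, p, p'})) Y Z (insert_subset hrU sdiff_subset) hYU hZU
      (by rw [card_insert_of_notMem hrn]; omega) cY cZ
    rw [cnt_insert H _ _ _ hrn] at h1
    push_cast at h1
    apply Two.s23
    refine finish_two H (hX hwX) (hX hwX') (hB hu) (hB hp) (hB hp') (hQ hv) (hQ hq) hne n1 n2 n3 n4
      e1 e2 e3 S (hS.trans hQ) hSc e4 ?_
    apply type_real H _ _ _ k (by omega) cY.le
    rw [cnt_swap12, cnt_swap23, cY, cZ]
    have cA' : ((U1 \ {u, p, p'}).card : ℝ) + 1 = k := by exact_mod_cast cA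
    rw [show ((U1 \ {u, p, p'}).card : ℝ) = k - 1 by linarith]
    nlinarith
  push Not at hr
  have hu' := hr u (by simp)
  have hp'' := hr p (by simp)
  have cA : (U1 \ {u, p}).card = k := by
    have := card_sdiff_add_card_eq_card (s := {u, p}) (t := U1)
      (by simp [insert_subset_iff, hB hu, hB hp])
    rw [card_pair n1] at this
    omega
  obtain ⟨X2, X1, X3, hX2, hX1, hX3, d2, d1, d3, hM⟩ := Mc.shrink H
    (KB.mc H (KB.s12 H hKB) he3 hYU (sdiff_subset (s := U1) (t := {u, p})) hZU cY.ge cA.ge cZ.ge)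
  have f2 := card_sdiff_add_card_eq_card hX2
  have f3 := card_sdiff_add_card_eq_card hX3
  refine ⟨X1, X2, X3, hX1.trans sdiff_subset, hX2.trans hYU, hX3.trans hZU, Or.inr (Or.inl hM),
    Or.inl ?_⟩
  have huX : u ∉ X1 := fun h => (mem_sdiff.1 (hX1 h)).2 (by simp)
  have hpX : p ∉ X1 := fun h => (mem_sdiff.1 (hX1 h)).2 (by simp)
  apply Mc.mono H (A := U1 \ X1) Subset.rfl (sdiff_subset_sdiff hYU Subset.rfl)
    (sdiff_subset_sdiff hZU Subset.rfl)
  have gY : ((Y \ X2).card : ℝ) + 2 = k := by exact_mod_cast (by omega : (Y \ X2).card + 2 = k)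
  have gZ : ((Z \ X3).card : ℝ) + 3 = k := by exact_mod_cast (by omega : (Z \ X3).card + 3 = k)
  have hres : ∀ r, e0 - (3 * k ^ 2 - k) ≤ ((lk H Y Z r).card : ℝ) →
      2 * (Y \ X2).card + 2 * (Z \ X3).card < (lk H (Y \ X2) (Z \ X3) r).card ∧
      (Y \ X2).card * (Z \ X3).card < 2 * (lk H (Y \ X2) (Z \ X3) r).card := by
    intro r hr
    have h1 := lk_restrict H (sdiff_subset (s := Y) (t := X2)) (sdiff_subset (s := Z) (t := X3)) r
    have h2 : ((lk H Y Z r).card : ℝ) + (Y \ X2).card * (Z \ X3).card ≤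
      (lk H (Y \ X2) (Z \ X3) r).card + Y.card * Z.card := by exact_mod_cast h1
    have hh : ((Y \ X2).card : ℝ) = k - 2 := by linarith
    have hh' : ((Z \ X3).card : ℝ) = k - 3 := by linarith
    rw [cY, cZ, hh, hh'] at h2
    constructor
    · have : (2 * (Y \ X2).card + 2 * (Z \ X3).card : ℝ) < (lk H (Y \ X2) (Z \ X3) r).card := by
        rw [hh, hh']
        nlinarith [sq_nonneg ((k : ℝ) - 6)]
      exact_mod_cast this
    · have : ((Y \ X2).card * (Z \ X3).card : ℝ) < 2 * (lk H (Y \ X2) (Z \ X3) r).card := by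
        rw [hh, hh']
        nlinarith
      exact_mod_cast this
  have ru := hres u hu'
  have rp := hres p hp''
  obtain ⟨c, hc, hc'⟩ := share (lk_sub H (Y \ X2) (Z \ X3) u) (lk_sub H (Y \ X2) (Z \ X3) p)
    (by omega)
  obtain ⟨a, ha, ha1, ha2⟩ := avoid_lines (Y \ X2) (Z \ X3) _ (lk_sub H (Y \ X2) (Z \ X3) u)
    {c.1} {c.2} (by rw [card_singleton, card_singleton]; omega)
  obtain ⟨b, hb, hb1, hb2⟩ := avoid_lines (Y \ X2) (Z \ X3) _ (lk_sub H (Y \ X2) (Z \ X3) p)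
    {c.1, a.1} {c.2, a.2} (by
      have h1 : ({c.1, a.1} : Finset V).card ≤ 2 := card_le_two
      have h2 : ({c.2, a.2} : Finset V).card ≤ 2 := card_le_two
      have h3 := Nat.mul_le_mul_right (Z \ X3).card h1
      have h4 := Nat.mul_le_mul_right (Y \ X2).card h2
      omega)
  simp only [mem_insert, mem_singleton, not_or] at ha1 ha2 hb1 hb2
  exact mk_Mc H (mem_sdiff.2 ⟨hB hu, huX⟩) (mem_sdiff.2 ⟨hB hp, hpX⟩) n1 hc hc' ha hb
    (Ne.symm ha1) (Ne.symm hb1.1) (Ne.symm hb1.2) (Ne.symm ha2) (Ne.symm hb2.1) (Ne.symm hb2.2)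

lemma def2_two (hk : 6 ≤ k) (hk' : k ≤ 35) (hKB : KB H k e0 U1 U2 U3)
    (he : 21 * (k : ℝ) ^ 3 < 2 * (3 * k - 2) * e0)
    (c1 : U1.card = k + 2) (c2 : U2.card = k + 2) (c3 : U3.card = k + 2) : Two H U1 U2 U3 := by
  have hkR : (6 : ℝ) ≤ k := by exact_mod_cast hk
  have he0 : 7 / 2 * (k : ℝ) ^ 2 + 7 / 3 * k + 14 / 9 < e0 := by
    by_contra hcon
    push Not at hcon
    have := mul_le_mul_of_nonneg_left hcon (by linarith : (0 : ℝ) ≤ 2 * (3 * k - 2))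
    nlinarith
  have he3 : 3 * (k : ℝ) ^ 2 < e0 := by nlinarith
  obtain ⟨X1, X2, X3, hX1, hX2, hX3, d1, d2, d3, hM⟩ := Mc.shrink H
    (KB.mc H hKB he3 (Subset.refl U1) (Subset.refl U2) (Subset.refl U3) (by omega) (by omega) (by omega))
  have f1 := card_sdiff_add_card_eq_card hX1
  have f2 := card_sdiff_add_card_eq_card hX2
  have f3 := card_sdiff_add_card_eq_card hX3
  by_cases hB : Mc H (U1 \ X1) (U2 \ X2) (U3 \ X3)
  · exact ⟨X1, X2, X3, hX1, hX2, hX3, Or.inl hM, Or.inl hB⟩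
  have g1 : ((U1 \ X1).card : ℝ) = k := by exact_mod_cast (by omega : (U1 \ X1).card = k)
  have g2 : ((U2 \ X2).card : ℝ) + 1 = k := by exact_mod_cast (by omega : (U2 \ X2).card + 1 = k)
  have g3 : ((U3 \ X3).card : ℝ) + 1 = k := by exact_mod_cast (by omega : (U3 \ X3).card + 1 = k)
  have hcnt : (cnt H (U1 \ X1) (U2 \ X2) (U3 \ X3) : ℝ) ≤ 3 * k ^ 2 - 4 * k + 1 := by
    by_contra hcon
    push Not at hcon
    apply hB
    apply type_real H _ _ _ (k - 1) (by omega) (by omega)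
    rw [g1, show ((U3 \ X3).card : ℝ) = k - 1 by linarith,
      show ((U2 \ X2).card : ℝ) = k - 1 by linarith, Nat.cast_sub (by omega)]
    push_cast
    nlinarith
  have hsum : ∀ w ∈ X2, ∀ z ∈ X3, e0 - 3 * k ^ 2 + 3 * k - 1 ≤
      ((lk H (U1 \ X1) (U3 \ X3) w).card : ℝ) + (lk H (U1 \ X1) (U2 \ X2) z).card := by
    intro w hw z hz
    have hwn : w ∉ U2 \ X2 := fun h => (mem_sdiff.1 h).2 hw
    have hzn : z ∉ U3 \ X3 := fun h => (mem_sdiff.1 h).2 hz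
    have h1 := hKB (U1 \ X1) (insert w (U2 \ X2)) (insert z (U3 \ X3)) sdiff_subset
      (insert_subset (hX2 hw) sdiff_subset)
      (insert_subset (hX3 hz) sdiff_subset) (by omega)
      (by rw [card_insert_of_notMem hwn]; omega) (by rw [card_insert_of_notMem hzn]; omega)
    rw [cnt_swap23, cnt_swap12, cnt_insert H _ _ _ hzn, cnt_swap12, cnt_swap23, cnt_swap12,
      cnt_insert H _ _ _ hwn, cnt_swap12] at h1
    have h2 := lk_restrict H (Subset.refl (U1 \ X1)) (subset_insert w (U2 \ X2)) z
    rw [card_insert_of_notMem hwn] at h2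
    have h3 : ((lk H (U1 \ X1) (insert w (U2 \ X2)) z).card : ℝ) + k * (U2 \ X2).card ≤
      (lk H (U1 \ X1) (U2 \ X2) z).card + k * ((U2 \ X2).card + 1) := by
      rw [← g1]; exact_mod_cast h2
    push_cast at h1
    nlinarith
  by_cases hall : ∀ w ∈ X2, e0 - 3 * k ^ 2 + 3 * k - 1 ≤ 2 * ((lk H (U1 \ X1) (U3 \ X3) w).card : ℝ)
  · exact core2 H hk hk' hKB he0 c1 c2 c3 hX2 sdiff_subset sdiff_subset d2 (by omega) (by omega) hall
  · push Not at hall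
    obtain ⟨w, hw, hlt⟩ := hall
    apply Two.s23
    exact core2 H (B := U1 \ X1) (Q := U2 \ X2) hk hk' (KB.s23 H hKB) he0 c1 c3 c2 hX3 sdiff_subset sdiff_subset d3 (by omega)
      (by omega) (fun z hz => by have := hsum w hw z hz; linarith)

end

open Finset

section
variable {V : Type} [DecidableEq V] (H : Finset (Finset V))
variable {k : ℕ} {U1 U2 U3 V1 V2 V3 : Finset V}

lemma cnt_mono {A B C B' C' : Finset V} (hB : B ⊆ B') (hC : C ⊆ C') :
    cnt H A B C ≤ cnt H A B' C' :=
  sum_le_sum fun x _ => card_le_card (lk_mono H hB hC x)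

/-- some element of W has a small link -/
lemma avg {W B C : Finset V} {D : ℝ} (hk : 0 < k) (cW : W.card = k)
    (h : (cnt H W B C : ℝ) ≤ D * k) : ∃ w ∈ W, ((lk H B C w).card : ℝ) ≤ D := by
  by_contra hcon
  push Not at hcon
  have h1 : ∑ w ∈ W, D < ∑ w ∈ W, ((lk H B C w).card : ℝ) :=
    sum_lt_sum_of_nonempty (card_pos.1 (by omega)) hcon
  rw [sum_const, nsmul_eq_mul, cW] at h1
  rw [cnt] at h
  push_cast at h
  linarith

lemma def2_big {ε d : ℝ} (hk : 36 ≤ k) (hε : 0 < ε) (hd : 2 * ε ≤ d)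
    (hbox : ∀ A B C : Finset V, A ⊆ V1 → B ⊆ V2 → C ⊆ V3 → A.card = k → B.card = k → C.card = k →
      (d - ε) * (k : ℝ) ^ 3 ≤ cnt H A B C ∧ (cnt H A B C : ℝ) ≤ (d + ε) * (k : ℝ) ^ 3)
    (he : 21 < 2 * ε * (3 * k - 2)) (hm : (k : ℝ) - 1 < ε * V1.card)
    (hs1 : V2.card ≤ V1.card) (hs2 : V3.card ≤ V2.card)
    (hbal : 5 * V1.card ≤ 3 * (V2.card + V3.card)) (hU1 : U1 ⊆ V1) (hU2 : U2 ⊆ V2) (hU3 : U3 ⊆ V3)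
    (c1 : U1.card = k + 2) (c2 : U2.card = k + 2) (c3 : U3.card = k + 2) : Two H U1 U2 U3 := by
  have hkR : (36 : ℝ) ≤ k := by exact_mod_cast hk
  have hεk : 7 / 2 < ε * k := by nlinarith
  have hKB : KB H k (ε * (k : ℝ) ^ 3) U1 U2 U3 := by
    intro A B C hA hB hC cA cB cC
    have := (hbox A B C (hA.trans hU1) (hB.trans hU2) (hC.trans hU3) cA cB cC).1
    have h3 : (0 : ℝ) ≤ (k : ℝ) ^ 3 := by positivity
    nlinarith
  have he3 : 3 * (k : ℝ) ^ 2 < ε * (k : ℝ) ^ 3 := by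
    have h2 : (0 : ℝ) < (k : ℝ) ^ 2 := by positivity
    nlinarith
  obtain ⟨X1, X2, X3, hX1, hX2, hX3, d1, d2, d3, hM⟩ := Mc.shrink H
    (KB.mc H hKB he3 (Subset.refl U1) (Subset.refl U2) (Subset.refl U3) (by omega) (by omega) (by omega))
  have f1 := card_sdiff_add_card_eq_card hX1
  have f2 := card_sdiff_add_card_eq_card hX2
  have f3 := card_sdiff_add_card_eq_card hX3
  refine ⟨X1, X2, X3, hX1, hX2, hX3, Or.inl hM, Or.inl ?_⟩
  have hB1 : U1 \ X1 ⊆ V1 := sdiff_subset.trans hU1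
  have hB2 : U2 \ X2 ⊆ V2 := sdiff_subset.trans hU2
  have hB3 : U3 \ X3 ⊆ V3 := sdiff_subset.trans hU3
  obtain ⟨z0, hz0⟩ : X3.Nonempty := card_pos.1 (by omega)
  obtain ⟨w0, hw0⟩ : X2.Nonempty := card_pos.1 (by omega)
  have hw0n : w0 ∉ U2 \ X2 := fun h => (mem_sdiff.1 h).2 hw0
  have hz0n : z0 ∉ U3 \ X3 := fun h => (mem_sdiff.1 h).2 hz0
  have hw0V := hU2 (hX2 hw0)
  have hz0V := hU3 (hX3 hz0)
  clear hM hX1 hX2 hX3 hKB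
  generalize U1 \ X1 = B1 at *
  generalize U2 \ X2 = B2 at *
  generalize U3 \ X3 = B3 at *
  have b1 : B1.card = k := by omega
  have b2 : B2.card + 1 = k := by omega
  have b3 : B3.card + 1 = k := by omega
  have g1 : (B1.card : ℝ) = k := by exact_mod_cast b1
  have g2 : (B2.card : ℝ) = k - 1 := by
    have : (B2.card : ℝ) + 1 = k := by exact_mod_cast b2
    linarith
  have g3 : (B3.card : ℝ) = k - 1 := by
    have : (B3.card : ℝ) + 1 = k := by exact_mod_cast b3
    linarith
  have split : ∀ w z, w ∉ B2 → z ∉ B3 → cnt H B1 (insert w B2) (insert z B3) =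
      (lk H B1 (insert w B2) z).card + ((lk H B1 B3 w).card + cnt H B1 B2 B3) := by
    intro w z hw hz
    rw [cnt_swap23, cnt_swap12, cnt_insert H _ _ _ hz, cnt_swap12, cnt_swap23, cnt_swap12,
      cnt_insert H _ _ _ hw, cnt_swap12]
  suffices hcnt : 3 * (k : ℝ) ^ 2 - 4 * k + 1 < cnt H B1 B2 B3 by
    apply type_real H _ _ _ (k - 1) (by omega) (by omega)
    rw [g1, g2, g3, Nat.cast_sub (by omega)]
    push_cast
    nlinarith
  by_cases hbig : 2 * k ≤ V3.card + 1
  · obtain ⟨W2, hW2, cW2⟩ := exists_subset_card_eq (s := V2 \ B2) (n := k) (by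
      have := card_sdiff_add_card_eq_card hB2
      omega)
    obtain ⟨W3, hW3, cW3⟩ := exists_subset_card_eq (s := V3 \ B3) (n := k) (by
      have := card_sdiff_add_card_eq_card hB3
      omega)
    obtain ⟨w, hw, hwl⟩ := avg H (W := W2) (B := B1) (C := B3) (D := (d + ε) * (k : ℝ) ^ 2)
      (k := k) (by omega) cW2 (by
        have h1 := (hbox B1 W2 (insert z0 B3) hB1 (hW2.trans sdiff_subset)
          (insert_subset hz0V hB3) b1 cW2 (by rw [card_insert_of_notMem hz0n]; omega)).2
        rw [cnt_swap12] at h1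
        have h2 : (cnt H W2 B1 B3 : ℝ) ≤ cnt H W2 B1 (insert z0 B3) := by
          exact_mod_cast cnt_mono H Subset.rfl (subset_insert _ _)
        nlinarith)
    have hw' := mem_sdiff.1 (hW2 hw)
    obtain ⟨z, hz, hzl⟩ := avg H (W := W3) (B := B1) (C := insert w B2) (D := (d + ε) * (k : ℝ) ^ 2)
      (k := k) (by omega) cW3 (by
        have h1 := (hbox B1 (insert w B2) W3 hB1 (insert_subset hw'.1 hB2) (hW3.trans sdiff_subset)
          b1 (by rw [card_insert_of_notMem hw'.2]; omega) cW3).2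
        rw [cnt_swap23, cnt_swap12] at h1
        nlinarith)
    have hz' := mem_sdiff.1 (hW3 hz)
    have h1 := (hbox B1 (insert w B2) (insert z B3) hB1 (insert_subset hw'.1 hB2)
      (insert_subset hz'.1 hB3) b1 (by rw [card_insert_of_notMem hw'.2]; omega)
      (by rw [card_insert_of_notMem hz'.2]; omega)).1
    rw [split w z hw'.2 hz'.2] at h1
    push_cast at h1
    have h2 : ε * ((k : ℝ) ^ 3 - 6 * k ^ 2) ≤ cnt H B1 B2 B3 := by
      have h3 : (0 : ℝ) ≤ k ^ 3 - 2 * k ^ 2 := by nlinarith [sq_nonneg (k : ℝ)]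
      nlinarith
    have h4 : 7 / 2 * ((k : ℝ) * (k - 6)) ≤ ε * k * (k * (k - 6)) :=
      mul_le_mul_of_nonneg_right hεk.le (by nlinarith)
    nlinarith
  · have h1 := (hbox B1 (insert w0 B2) (insert z0 B3) hB1 (insert_subset hw0V hB2)
      (insert_subset hz0V hB3) b1 (by rw [card_insert_of_notMem hw0n]; omega)
      (by rw [card_insert_of_notMem hz0n]; omega)).1
    rw [split w0 z0 hw0n hz0n] at h1
    have l1 : (lk H B1 (insert w0 B2) z0).card ≤ k * k := by
      have := card_le_card (lk_sub H B1 (insert w0 B2) z0)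
      rw [card_product, card_insert_of_notMem hw0n, b1, b2] at this
      exact this
    have l2 : (lk H B1 B3 w0).card ≤ k * k := by
      have := card_le_card (lk_sub H B1 B3 w0)
      rw [card_product, b1] at this
      exact this.trans (Nat.mul_le_mul_left _ (by omega))
    have l1' : ((lk H B1 (insert w0 B2) z0).card : ℝ) ≤ k * k := by exact_mod_cast l1
    have l2' : ((lk H B1 B3 w0).card : ℝ) ≤ k * k := by exact_mod_cast l2
    push_cast at h1
    have hm3 : (V1.card : ℝ) ≤ 3 * k := by
      have : V1.card ≤ 3 * k := by omega
      exact_mod_cast this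
    have hε3 : (k : ℝ) - 1 < ε * (3 * k) := by nlinarith
    have h5 : ε * (k : ℝ) ^ 3 ≤ (d - ε) * k ^ 3 := by
      have : (0 : ℝ) ≤ (k : ℝ) ^ 3 := by positivity
      nlinarith
    have h6 : ((k : ℝ) - 1) * k ^ 2 ≤ ε * (3 * k) * k ^ 2 :=
      mul_le_mul_of_nonneg_right hε3.le (by positivity)
    have h7 : 36 * (k : ℝ) ^ 2 ≤ k * k ^ 2 := mul_le_mul_of_nonneg_right hkR (by positivity)
    have h8 : (k : ℝ) * k ^ 2 - k ^ 2 ≤ 3 * (ε * k ^ 3) := by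
      calc _ = ((k : ℝ) - 1) * k ^ 2 := by ring
        _ ≤ _ := h6
        _ = _ := by ring
    have h9 : (k : ℝ) * k = k ^ 2 := by ring
    rw [h9] at l1' l2'
    have h10 : (0 : ℝ) < k ^ 2 := by positivity
    linarith

end

open Finset

section
variable {V : Type} [DecidableEq V] (H : Finset (Finset V))

structure Ctx (V1 V2 V3 : Finset V) (ε s : ℝ) (k T K : ℕ) : Prop where
  h12 : Disjoint V1 V2
  h13 : Disjoint V1 V3
  h23 : Disjoint V2 V3
  hs : 0 < s
  hεs : 7 / 2 < ε * s
  hseq : s = ε * V1.card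
  hε : 0 < ε
  hε1 : ε < 1
  hL : LReg H ε V1 V2 V3
  sz1 : V2.card ≤ V1.card
  sz2 : V3.card ≤ V2.card
  hbal : 5 * V1.card ≤ 3 * (V2.card + V3.card)
  hsk : s ≤ k
  hks : (k : ℝ) < s + 1
  hT0 : V1.card + V2.card + V3.card = T + 8 * K
  hTs : 3 * s < T

variable {V1 V2 V3 : Finset V} {ε s : ℝ} {k T K : ℕ} {H}

namespace Ctx
variable (c : Ctx H V1 V2 V3 ε s k T K)
include c

lemma le2 : ε * V2.card ≤ s := by
  rw [c.hseq]
  exact mul_le_mul_of_nonneg_left (by exact_mod_cast c.sz1) c.hε.le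

lemma le3 : ε * V3.card ≤ s := by
  rw [c.hseq]
  exact mul_le_mul_of_nonneg_left (by exact_mod_cast c.sz2.trans c.sz1) c.hε.le

lemma ge2 : 5 / 6 * s ≤ ε * V2.card := by
  have h : 5 * V1.card ≤ 6 * V2.card := by have := c.hbal; have := c.sz2; omega
  have h' : (5 * V1.card : ℝ) ≤ 6 * V2.card := by exact_mod_cast h
  rw [c.hseq]
  have := mul_le_mul_of_nonneg_left h' c.hε.le
  linarith

lemma ge3 : 2 / 3 * s ≤ ε * V3.card := by
  have h : 2 * V1.card ≤ 3 * V3.card := by have := c.hbal; have := c.sz1; omega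
  have h' : (2 * V1.card : ℝ) ≤ 3 * V3.card := by exact_mod_cast h
  rw [c.hseq]
  have := mul_le_mul_of_nonneg_left h' c.hε.le
  linarith

lemma big1 {A B C : Finset V} (hA : A ⊆ V1) (hB : B ⊆ V2) (hC : C ⊆ V3) (a : k ≤ A.card)
    (b : k ≤ B.card) (d : k ≤ C.card) : Mc H A B C ∧ Mc H B A C ∧ Mc H C A B := by
  have a' : (k : ℝ) ≤ A.card := by exact_mod_cast a
  have b' : (k : ℝ) ≤ B.card := by exact_mod_cast b
  have d' : (k : ℝ) ≤ C.card := by exact_mod_cast d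
  have l2 := c.le2
  have l3 := c.le3
  have hk := c.hsk
  have hs := c.hs
  have l1 := c.hseq
  exact ⟨ty1 H c.hs c.hεs c.hL hA hB hC (by linarith) (by linarith) (by linarith) (by linarith)
    (by linarith) (by linarith),
    ty2 H c.hs c.hεs c.hL hA hB hC (by linarith) (by linarith) (by linarith) (by linarith)
    (by linarith) (by linarith),
    ty3 H c.hs c.hεs c.hL hA hB hC (by linarith) (by linarith) (by linarith) (by linarith)
    (by linarith) (by linarith) (Or.inl (by linarith))⟩

lemma fin3 {U1 U2 U3 : Finset V} (hT : Til H V1 V2 V3 K U1 U2 U3)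
    (a : s ≤ U1.card) (b : ε * V2.card ≤ U2.card) (d : ε * V3.card ≤ U3.card)
    (bd : s ≤ U2.card ∨ 15 / 8 * s ≤ U2.card + U3.card) :
    ∃ W1 W2 W3, Til H V1 V2 V3 (K + 1) W1 W2 W3 := by
  have l2 := c.ge2
  have l3 := c.ge3
  have l1 := c.hseq
  have := ty3 H c.hs c.hεs c.hL hT.1 hT.2.1 hT.2.2.1 (by linarith) b d a (by linarith)
    (by linarith) bd
  exact ⟨_, _, _, hT.step H c.h12 c.h13 c.h23 Subset.rfl Subset.rfl Subset.rfl
    (Or.inr (Or.inr this))⟩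

lemma reach_big (n1 n2 n3 K' : ℕ) (h1 : k ≤ n1 + 2) (h2 : k ≤ n2 + 2) (h3 : k ≤ n3 + 2)
    (a1 : V1.card ≤ n1 + 3 * K') (a2 : V2.card ≤ n2 + 3 * K') (a3 : V3.card ≤ n3 + 3 * K')
    (hsum : V1.card + V2.card + V3.card = n1 + n2 + n3 + 8 * K') :
    ∃ U1 U2 U3, Til H V1 V2 V3 K' U1 U2 U3 ∧ U1.card = n1 ∧ U2.card = n2 ∧ U3.card = n3 := by
  obtain ⟨t1, ht1⟩ := Nat.exists_eq_add_of_le a1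
  obtain ⟨t2, ht2⟩ := Nat.exists_eq_add_of_le a2
  obtain ⟨t3, ht3⟩ := Nat.exists_eq_add_of_le a3
  have hK : K' = t1 + t2 + t3 := by omega
  have := reach H c.h12 c.h13 c.h23 n1 n2 n3 K' t1 t2 t3 0 V1 V2 V3 hK (Til.zero H V1 V2 V3)
    (by omega) (by omega) (by omega)
    (fun _ A B C hA hB hC a b d => (c.big1 hA hB hC (by omega) (by omega) (by omega)).1)
    (fun _ A B C hA hB hC a b d => (c.big1 hA hB hC (by omega) (by omega) (by omega)).2.1)
    (fun _ A B C hA hB hC a b d => (c.big1 hA hB hC (by omega) (by omega) (by omega)).2.2)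
  rw [zero_add] at this
  exact this

lemma case1 (hK : K = 0) : ∃ W1 W2 W3, Til H V1 V2 V3 (K + 1) W1 W2 W3 := by
  have hT : Til H V1 V2 V3 K V1 V2 V3 := by rw [hK]; exact Til.zero H V1 V2 V3
  have e := c.hε1
  have hs := c.hs
  apply c.fin3 hT
  · rw [c.hseq]; nlinarith [(Nat.cast_nonneg V1.card : (0 : ℝ) ≤ _)]
  · nlinarith [(Nat.cast_nonneg V2.card : (0 : ℝ) ≤ _)]
  · nlinarith [(Nat.cast_nonneg V3.card : (0 : ℝ) ≤ _)]
  · right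
    have h : 5 * T ≤ 8 * (V2.card + V3.card) := by have := c.hbal; have := c.hT0; omega
    have h' : (5 * T : ℝ) ≤ 8 * (V2.card + V3.card) := by exact_mod_cast h
    have := c.hTs
    linarith

/-- removing two vertices per tile keeps a class large -/
lemma keep {n : ℕ} (h4 : V1.card + V2.card + V3.card ≤ 4 * n) (hn : n ≤ V1.card) :
    ε * n + 2 * K ≤ n := by
  have hT : ε * (T + 8 * K) ≤ T := by
    have h1 : V2.card ≤ V1.card := c.sz1
    have h2 : V3.card ≤ V1.card := c.sz2.trans c.sz1
    have h3 : T + 8 * K ≤ 3 * V1.card := by have := c.hT0; omega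
    have h3' : (T + 8 * K : ℝ) ≤ 3 * V1.card := by exact_mod_cast h3
    have := mul_le_mul_of_nonneg_left h3' c.hε.le
    have := c.hTs
    have := c.hseq
    linarith
  have h4' : (T + 8 * K : ℝ) ≤ 4 * n := by
    have : T + 8 * K ≤ 4 * n := by have := c.hT0; omega
    exact_mod_cast this
  have he := c.hε
  have he1 := c.hε1
  nlinarith

lemma case2 {k2 k3 : ℕ} (h2 : ε * V2.card ≤ k2) (h2' : (k2 : ℝ) < ε * V2.card + 1)
    (h3 : ε * V3.card ≤ k3) (h3' : (k3 : ℝ) < ε * V3.card + 1) (hA : 3 * K + k + 1 ≤ V1.card) :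
    ∃ W1 W2 W3, Til H V1 V2 V3 (K + 1) W1 W2 W3 := by
  have hbal := c.hbal
  have hT0 := c.hT0
  have sz1 := c.sz1
  have sz2 := c.sz2
  have hε := c.hε
  have hε1 := c.hε1
  have hseq := c.hseq
  have hsk := c.hsk
  have hks := c.hks
  have hTs := c.hTs
  have l2 := c.ge2
  have l3 := c.ge3
  have hs := c.hs
  have u2 := c.le2
  obtain ⟨p, hp⟩ := Nat.exists_eq_add_of_le hbal
  obtain ⟨R, hR⟩ : ∃ R, V2.card + V3.card = R + 5 * K := ⟨V2.card + V3.card - 5 * K, by omega⟩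
  have hR3 : 5 * k + 5 + p ≤ 3 * R := by omega
  have h8R : 5 * T + p = 8 * R := by omega
  have h8R' : (5 * T + p : ℝ) = 8 * R := by exact_mod_cast h8R
  have hpn : (0 : ℝ) ≤ p := Nat.cast_nonneg p
  have hR15 : 15 / 8 * s ≤ R := by linarith
  have hkk : k2 + k3 ≤ R := by
    have hp' : (3 * (V2.card + V3.card) : ℝ) = 5 * V1.card + p := by exact_mod_cast hp
    have e1 : ε * V2.card + ε * V3.card = (5 * s + ε * p) / 3 := by
      rw [hseq]; linear_combination (ε / 3) * hp'
    have e2 : ε * p ≤ p := by nlinarith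
    have e3 : (3 * (k2 + k3) : ℝ) < 6 + p + 5 * k := by linarith
    have e4 : 3 * (k2 + k3) < 6 + p + 5 * k := by exact_mod_cast e3
    omega
  have hk2k : k2 ≤ k := by
    have : (k2 : ℝ) < k + 1 := by linarith
    have : k2 < k + 1 := by exact_mod_cast this
    omega
  have keep2 := c.keep (n := V2.card) (by omega) (by omega)
  have keep3 := c.keep (n := V3.card) (by omega) (by omega)
  have hK3 : 2 * K ≤ V3.card := by
    have : (2 * K : ℝ) ≤ V3.card := by nlinarith [(Nat.cast_nonneg V3.card : (0 : ℝ) ≤ _)]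
    exact_mod_cast this
  have hK2 : k2 + 2 * K ≤ V2.card := by
    have : (k2 + 2 * K : ℝ) < V2.card + 1 := by linarith
    have : k2 + 2 * K < V2.card + 1 := by exact_mod_cast this
    omega
  by_cases hc : 3 * K + k2 ≤ V2.card
  · obtain ⟨n1, hn1⟩ := Nat.exists_eq_add_of_le (show 3 * K ≤ V1.card by omega)
    obtain ⟨n2, hn2⟩ := Nat.exists_eq_add_of_le (show 3 * K ≤ V2.card by omega)
    obtain ⟨n3, hn3⟩ := Nat.exists_eq_add_of_le hK3
    have f1 : (k : ℝ) ≤ n1 := by exact_mod_cast (by omega : k ≤ n1)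
    have f2 : (k2 : ℝ) ≤ n2 := by exact_mod_cast (by omega : k2 ≤ n2)
    have f3 : ε * V3.card ≤ n3 := by
      have : (V3.card : ℝ) = 2 * K + n3 := by exact_mod_cast hn3
      linarith
    have f23 : (R : ℝ) = n2 + n3 := by exact_mod_cast (by omega : R = n2 + n3)
    obtain ⟨U1, U2, U3, hT, q1, q2, q3⟩ := reach H c.h12 c.h13 c.h23 n1 n2 n3 K 0 0 K 0 V1 V2 V3
      (by omega) (Til.zero H V1 V2 V3) (by omega) (by omega) (by omega)
      (fun h => absurd rfl h) (fun h => absurd rfl h) (by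
        intro _ A B C hA hB hC a b d
        have a' : (n1 + 2 : ℝ) ≤ A.card := by exact_mod_cast a
        have b' : (n2 + 2 : ℝ) ≤ B.card := by exact_mod_cast b
        have d' : (n3 + 2 : ℝ) ≤ C.card := by exact_mod_cast d
        exact ty3 H c.hs c.hεs c.hL hA hB hC (by linarith) (by linarith) (by linarith) (by linarith)
          (by linarith) (by linarith) (Or.inr (by linarith)))
    rw [zero_add] at hT
    apply c.fin3 hT
    · rw [q1]; linarith
    · rw [q2]; linarith
    · rw [q3]; linarith
    · right; rw [q2, q3]; linarith
  · obtain ⟨n1, hn1⟩ := Nat.exists_eq_add_of_le (show 3 * K ≤ V1.card by omega)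
    obtain ⟨n3, hn3⟩ := Nat.exists_eq_add_of_le (show k2 ≤ R by omega)
    obtain ⟨t2, ht2⟩ := Nat.exists_eq_add_of_le (show V2.card ≤ 3 * K + k2 by omega)
    obtain ⟨t3, ht3⟩ := Nat.exists_eq_add_of_le (show t2 ≤ K by omega)
    have f1 : (k : ℝ) ≤ n1 := by exact_mod_cast (by omega : k ≤ n1)
    have f3 : (k3 : ℝ) ≤ n3 := by exact_mod_cast (by omega : k3 ≤ n3)
    have f23 : (R : ℝ) = k2 + n3 := by exact_mod_cast hn3
    have f2k : (k2 : ℝ) ≤ k := by exact_mod_cast hk2k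
    obtain ⟨U1, U2, U3, hT, q1, q2, q3⟩ := reach H c.h12 c.h13 c.h23 n1 k2 n3 K 0 t2 t3 0 V1 V2 V3
      (by omega) (Til.zero H V1 V2 V3) (by omega) (by omega) (by omega)
      (fun h => absurd rfl h) (by
        intro _ A B C hA hB hC a b d
        have a' : (n1 + 2 : ℝ) ≤ A.card := by exact_mod_cast a
        have b' : (k2 + 2 : ℝ) ≤ B.card := by exact_mod_cast b
        have d' : (n3 + 2 : ℝ) ≤ C.card := by exact_mod_cast d
        exact ty2 H c.hs c.hεs c.hL hA hB hC (by linarith) (by linarith) (by linarith) (by linarith)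
          (by linarith) (by linarith)) (by
        intro _ A B C hA hB hC a b d
        have a' : (n1 + 2 : ℝ) ≤ A.card := by exact_mod_cast a
        have b' : (k2 + 2 : ℝ) ≤ B.card := by exact_mod_cast b
        have d' : (n3 + 2 : ℝ) ≤ C.card := by exact_mod_cast d
        exact ty3 H c.hs c.hεs c.hL hA hB hC (by linarith) (by linarith) (by linarith) (by linarith)
          (by linarith) (by linarith) (Or.inr (by linarith)))
    rw [zero_add] at hT
    apply c.fin3 hT
    · rw [q1]; linarith
    · rw [q2]; linarith
    · rw [q3]; linarith
    · right; rw [q2, q3]; linarith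

end Ctx
end

open Finset

section
variable {V : Type} [DecidableEq V] {H : Finset (Finset V)}
variable {V1 V2 V3 : Finset V} {ε s : ℝ} {k T K : ℕ}

namespace Ctx

lemma sq_big (c : Ctx H V1 V2 V3 ε s k T K) {n : ℕ} (h : n ≤ V1.card) :
    7 / 2 * (n : ℝ) ≤ s * s := by
  have h' : (n : ℝ) ≤ V1.card := by exact_mod_cast h
  have e := c.hεs
  have q : s * s = (ε * s) * V1.card := by nth_rewrite 1 [c.hseq]; ring
  rw [q]
  have : (0 : ℝ) ≤ V1.card := Nat.cast_nonneg _
  nlinarith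

lemma finish2 (c : Ctx H V1 V2 V3 ε s k T K) {K' : ℕ} {U1 U2 U3 : Finset V}
    (hT : Til H V1 V2 V3 K' U1 U2 U3) (h : Two H U1 U2 U3) (hK : K = K' + 1) :
    ∃ W1 W2 W3, Til H V1 V2 V3 (K + 1) W1 W2 W3 := by
  obtain ⟨X1, X2, X3, h1, h2, h3, m, m'⟩ := h
  subst hK
  exact ⟨_, _, _, (hT.step H c.h12 c.h13 c.h23 h1 h2 h3 m).step H c.h12 c.h13 c.h23
    Subset.rfl Subset.rfl Subset.rfl m'⟩

lemma kb (c : Ctx H V1 V2 V3 ε s k T K) {U1 U2 U3 : Finset V} (h1 : U1 ⊆ V1) (h2 : U2 ⊆ V2)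
    (h3 : U3 ⊆ V3) : KB H k (ε * (k : ℝ) ^ 3) U1 U2 U3 := by
  intro A B C hA hB hC cA cB cC
  have l1 := c.hseq
  have l2 := c.le2
  have l3 := c.le3
  have hk := c.hsk
  have := c.hL A B C (hA.trans h1) (hB.trans h2) (hC.trans h3) (by rw [cA]; linarith)
    (by rw [cB]; linarith) (by rw [cC]; linarith)
  rw [cA, cB, cC] at this
  calc ε * (k : ℝ) ^ 3 = ε * ((k : ℝ) * k * k) := by ring
    _ ≤ _ := this

lemma three (c : Ctx H V1 V2 V3 ε s k T K) : 3 * k ≤ T + 2 := by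
  have := c.hTs
  have := c.hks
  have : (3 * k : ℝ) < T + 3 := by linarith
  have : 3 * k < T + 3 := by exact_mod_cast this
  omega

lemma special (c : Ctx H V1 V2 V3 ε s k T K) {k2 k3 : ℕ} (h2 : ε * V2.card ≤ k2)
    (h3 : ε * V3.card ≤ k3) (hK : 1 ≤ K) (hA : V1.card ≤ 3 * K + k) (hT : T + 2 = 3 * k)
    (e2 : k2 + 1 = k) (e3 : k3 + 1 = k) :
    ∃ W1 W2 W3, Til H V1 V2 V3 (K + 1) W1 W2 W3 := by
  have hT0 := c.hT0
  have sz1 := c.sz1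
  have sz2 := c.sz2
  have hTs := c.hTs
  have hT' : (T + 2 : ℝ) = 3 * k := by exact_mod_cast hT
  have e2' : (k2 + 1 : ℝ) = k := by exact_mod_cast e2
  have e3' : (k3 + 1 : ℝ) = k := by exact_mod_cast e3
  have sq := c.sq_big (n := k + 2) (by omega)
  push_cast at sq
  have hs := c.hs
  have hk6 : 6 ≤ k := by
    by_contra hcon
    have : (k : ℝ) ≤ 5 := by exact_mod_cast (by omega : k ≤ 5)
    nlinarith
  have hk6' : (6 : ℝ) ≤ k := by exact_mod_cast hk6
  have hne : V2.card ≠ V1.card := by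
    intro h
    rw [h, ← c.hseq] at h2
    have := c.hks
    have : s ≤ k2 := h2
    -- s ≤ k - 1
    have hks := c.hks
    linarith
  obtain ⟨U1, U2, U3, hU, q1, q2, q3⟩ := c.reach_big k k2 k3 K (by omega) (by omega) (by omega)
    (by omega) (by omega) (by omega) (by omega)
  apply c.fin3 hU
  · rw [q1]; exact c.hsk
  · rw [q2]; exact h2
  · rw [q3]; exact h3
  · right; rw [q2, q3]; linarith

lemma generic (c : Ctx H V1 V2 V3 ε s k T K) {k3 : ℕ}
    (h3 : ε * V3.card ≤ k3) (hK : 1 ≤ K) (hA : V1.card ≤ 3 * K + k) (hT : 2 * k + k3 ≤ T) :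
    ∃ W1 W2 W3, Til H V1 V2 V3 (K + 1) W1 W2 W3 := by
  have hT0 := c.hT0
  have sz1 := c.sz1
  have sz2 := c.sz2
  have t3 := c.three
  have l2 := c.le2
  have hsk := c.hsk
  have hne : V3.card = V1.card → k ≤ k3 := by
    intro h
    rw [h, ← c.hseq] at h3
    have := c.hks
    have : (k : ℝ) < k3 + 1 := by linarith
    have : k < k3 + 1 := by exact_mod_cast this
    omega
  obtain ⟨n, hn⟩ := Nat.exists_eq_add_of_le (show 2 * k ≤ T by omega)
  obtain ⟨U1, U2, U3, hU, q1, q2, q3⟩ := c.reach_big k k n K (by omega) (by omega) (by omega)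
    (by omega) (by omega) (by omega) (by omega)
  have : (k3 : ℝ) ≤ n := by exact_mod_cast (by omega : k3 ≤ n)
  apply c.fin3 hU
  · rw [q1]; exact hsk
  · rw [q2]; linarith
  · rw [q3]; linarith
  · left; rw [q2]; exact hsk

lemma defect1 (c : Ctx H V1 V2 V3 ε s k T K)
    (h3 : (k : ℝ) < ε * V3.card + 1) (hK : 1 ≤ K) (hA : V1.card ≤ 3 * K + k)
    (hT : T + 1 = 3 * k) :
    ∃ W1 W2 W3, Til H V1 V2 V3 (K + 1) W1 W2 W3 := by
  have hT0 := c.hT0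
  have sz1 := c.sz1
  have sz2 := c.sz2
  have hTs := c.hTs
  have hseq := c.hseq
  have hε := c.hε
  have hεs := c.hεs
  have hT' : (T + 1 : ℝ) = 3 * k := by exact_mod_cast hT
  have sq := c.sq_big (n := k + 3) (by omega)
  push_cast at sq
  have hs := c.hs
  have hk6 : 6 ≤ k := by
    by_contra hcon
    have : (k : ℝ) ≤ 5 := by exact_mod_cast (by omega : k ≤ 5)
    nlinarith
  have hk6' : (6 : ℝ) ≤ k := by exact_mod_cast hk6
  have hV2 : V2.card + 1 ≤ 3 * K + k := by
    by_contra hcon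
    have f1 : V1.card = 3 * K + k := by omega
    have f3 : V3.card + 1 = 2 * K + k := by omega
    have f1' : (V1.card : ℝ) = 3 * K + k := by exact_mod_cast f1
    have f3' : (V3.card : ℝ) + 1 = 2 * K + k := by exact_mod_cast f3
    have hK' : (1 : ℝ) ≤ K := by exact_mod_cast hK
    have a1 : ((k : ℝ) - 1) * V1.card ≤ (ε * V3.card) * V1.card :=
      mul_le_mul_of_nonneg_right (by linarith) (Nat.cast_nonneg _)
    have a2 : (ε * V1.card) * V3.card ≤ (k - 1 / 3) * V3.card :=
      mul_le_mul_of_nonneg_right (by linarith) (Nat.cast_nonneg _)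
    have a3 : ((k : ℝ) - 1) * V1.card ≤ (k - 1 / 3) * V3.card := by
      calc _ ≤ _ := a1
        _ = (ε * V1.card) * V3.card := by ring
        _ ≤ _ := a2
    have f3'' : (V3.card : ℝ) = 2 * K + k - 1 := by linarith
    rw [f1', f3''] at a3
    nlinarith [mul_nonneg (by linarith : (0 : ℝ) ≤ k - 6) (by linarith : (0 : ℝ) ≤ (K : ℝ) - 1)]
  obtain ⟨K', rfl⟩ : ∃ K', K = K' + 1 := ⟨K - 1, by omega⟩
  obtain ⟨U1, U2, U3, hU, q1, q2, q3⟩ := c.reach_big (k + 3) (k + 2) (k + 2) K' (by omega)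
    (by omega) (by omega) (by omega) (by omega) (by omega) (by omega)
  refine c.finish2 hU (def1_two H hk6 (c.kb hU.1 hU.2.1 hU.2.2.1) ?_ q1 q2 q3) rfl
  have e1 : 21 / 2 < ε * (3 * k - 1) := by nlinarith
  have e2 : (0 : ℝ) < (k : ℝ) ^ 3 := by positivity
  nlinarith

lemma defect2 (c : Ctx H V1 V2 V3 ε s k T K) {d : ℝ} (hd : 2 * ε ≤ d)
    (hbox : ∀ A B C : Finset V, A ⊆ V1 → B ⊆ V2 → C ⊆ V3 → A.card = k → B.card = k → C.card = k →
      (d - ε) * (k : ℝ) ^ 3 ≤ cnt H A B C ∧ (cnt H A B C : ℝ) ≤ (d + ε) * (k : ℝ) ^ 3)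
    (h2 : (k : ℝ) < ε * V2.card + 1)
    (h3 : (k : ℝ) < ε * V3.card + 2) (hK : 1 ≤ K) (hA : V1.card ≤ 3 * K + k)
    (hT : T + 2 = 3 * k) :
    ∃ W1 W2 W3, Til H V1 V2 V3 (K + 1) W1 W2 W3 := by
  have hT0 := c.hT0
  have sz1 := c.sz1
  have sz2 := c.sz2
  have hTs := c.hTs
  have hseq := c.hseq
  have hε := c.hε
  have hε1 := c.hε1
  have hεs := c.hεs
  have hbal := c.hbal
  have hT' : (T + 2 : ℝ) = 3 * k := by exact_mod_cast hT
  have sq := c.sq_big (n := k + 2) (by omega)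
  push_cast at sq
  have hs := c.hs
  have hk6 : 6 ≤ k := by
    by_contra hcon
    have : (k : ℝ) ≤ 5 := by exact_mod_cast (by omega : k ≤ 5)
    nlinarith
  have hk6' : (6 : ℝ) ≤ k := by exact_mod_cast hk6
  have hV1 : V1.card + 1 ≤ 3 * K + k := by
    by_contra hcon
    have f1 : V1.card = 3 * K + k := by omega
    obtain ⟨p, hp⟩ := Nat.exists_eq_add_of_le hbal
    have f3 : p + 6 = k := by omega
    have f3' : (p : ℝ) + 6 = k := by exact_mod_cast f3
    have hp' : (3 * (V2.card + V3.card) : ℝ) = 5 * V1.card + p := by exact_mod_cast hp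
    have e1 : 3 * (ε * V2.card + ε * V3.card) = 5 * s + ε * p := by
      rw [hseq]; linear_combination ε * hp'
    have hpn : (0 : ℝ) ≤ p := Nat.cast_nonneg p
    have e2 : ε * p ≤ p := by nlinarith
    linarith
  obtain ⟨K', rfl⟩ : ∃ K', K = K' + 1 := ⟨K - 1, by omega⟩
  obtain ⟨U1, U2, U3, hU, q1, q2, q3⟩ := c.reach_big (k + 2) (k + 2) (k + 2) K' (by omega)
    (by omega) (by omega) (by omega) (by omega) (by omega) (by omega)
  have e1 : 21 / 2 < ε * (3 * k - 2) := by nlinarith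
  refine c.finish2 hU ?_ rfl
  by_cases hk35 : k ≤ 35
  · refine def2_two H hk6 hk35 (c.kb hU.1 hU.2.1 hU.2.2.1) ?_ q1 q2 q3
    have e2 : (0 : ℝ) < (k : ℝ) ^ 3 := by positivity
    nlinarith
  · have hks := c.hks
    exact def2_big H (by omega) hε hd hbox (by linarith) (by linarith) sz1 sz2 hbal
      hU.1 hU.2.1 hU.2.2.1 q1 q2 q3

lemma case3 (c : Ctx H V1 V2 V3 ε s k T K) {d : ℝ} (hd : 2 * ε ≤ d)
    (hbox : ∀ A B C : Finset V, A ⊆ V1 → B ⊆ V2 → C ⊆ V3 → A.card = k → B.card = k → C.card = k →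
      (d - ε) * (k : ℝ) ^ 3 ≤ cnt H A B C ∧ (cnt H A B C : ℝ) ≤ (d + ε) * (k : ℝ) ^ 3)
    {k2 k3 : ℕ} (h2 : ε * V2.card ≤ k2) (h2' : (k2 : ℝ) < ε * V2.card + 1)
    (h3 : ε * V3.card ≤ k3) (h3' : (k3 : ℝ) < ε * V3.card + 1) (hK : 1 ≤ K)
    (hA : V1.card ≤ 3 * K + k) :
    ∃ W1 W2 W3, Til H V1 V2 V3 (K + 1) W1 W2 W3 := by
  have t3 := c.three
  have hsk := c.hsk
  have l2 := c.le2
  have h32 : ε * V3.card ≤ ε * V2.card :=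
    mul_le_mul_of_nonneg_left (by exact_mod_cast c.sz2) c.hε.le
  have a : k2 ≤ k := by
    have : (k2 : ℝ) < k + 1 := by linarith
    have : k2 < k + 1 := by exact_mod_cast this
    omega
  have b : k3 ≤ k2 := by
    have : (k3 : ℝ) < k2 + 1 := by linarith
    have : k3 < k2 + 1 := by exact_mod_cast this
    omega
  by_cases g : 2 * k + k3 ≤ T
  · exact c.generic h3 hK hA g
  by_cases g1 : T + 1 = 3 * k
  · have : (k : ℝ) = k3 := by exact_mod_cast (by omega : k = k3)
    exact c.defect1 (by linarith) hK hA g1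
  have g2 : T + 2 = 3 * k := by omega
  by_cases g3 : k2 = k
  · have : (k2 : ℝ) = k := by exact_mod_cast g3
    have : (k : ℝ) ≤ k3 + 1 := by exact_mod_cast (by omega : k ≤ k3 + 1)
    exact c.defect2 hd hbox (by linarith) (by linarith) hK hA g2
  · exact c.special h2 h3 hK hA g2 (by omega) (by omega)

end Ctx
end

theorem M_tiling_of_regular_triple (V : Type) [Fintype V] [DecidableEq V]
    (H : Finset (Finset V)) (huniform : ∀ e ∈ H, e.card = 3)
    (ε d : ℝ) (hε : 0 < ε) (hd : 2 * ε ≤ d)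
    (V1 V2 V3 : Finset V)
    (hdisj12 : Disjoint V1 V2) (hdisj13 : Disjoint V1 V3) (hdisj23 : Disjoint V2 V3)
    (hreg : RegTriple H ε d V1 V2 V3)
    (hsz1 : V2.card ≤ V1.card) (hsz2 : V3.card ≤ V2.card)
    (hbal : 5 * V1.card ≤ 3 * (V2.card + V3.card))
    (hm : 7 < 2 * ε ^ 2 * (V1.card : ℝ)) :
    ∃ (q : ℕ) (gs : Fin q → Fin 8 → V),
      (∀ i, IsMCopy H (gs i)) ∧
      (∀ i j, i ≠ j → ∀ a b, gs i a ≠ gs j b) ∧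
      (∀ i a, gs i a ∈ V1 ∪ V2 ∪ V3) ∧
      (∀ i, ∀ e ∈ MCopyEdges (gs i),
        (e ∩ V1).card = 1 ∧ (e ∩ V2).card = 1 ∧ (e ∩ V3).card = 1) ∧
      ((((V1 ∪ V2 ∪ V3) \ Finset.univ.biUnion fun i => Finset.univ.image (gs i)).card : ℝ)
        ≤ 3 * ε * (V1.card : ℝ)) := by
  obtain ⟨s, hs⟩ : ∃ s : ℝ, s = ε * V1.card := ⟨_, rfl⟩
  have hεs : 7 / 2 < ε * s := by rw [hs]; linarith
  have hspos : 0 < s := by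
    by_contra h
    push Not at h
    nlinarith
  by_cases hsmall : (V1.card : ℝ) + V2.card + V3.card ≤ 3 * s
  · refine Til.final H hdisj12 hdisj13 hdisj23 (Til.zero H V1 V2 V3) _ ?_
    push_cast
    linarith
  push Not at hsmall
  have s1 : (V2.card : ℝ) ≤ V1.card := by exact_mod_cast hsz1
  have s2 : (V3.card : ℝ) ≤ V2.card := by exact_mod_cast hsz2
  have hε1 : ε < 1 := by
    by_contra h
    push Not at h
    nlinarith [(Nat.cast_nonneg V1.card : (0 : ℝ) ≤ _)]
  obtain ⟨x, hx⟩ : ∃ x : ℝ, x = ((V1.card : ℝ) + V2.card + V3.card - 3 * s) / 8 := ⟨_, rfl⟩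
  have hx0 : 0 < x := by rw [hx]; linarith
  have hN1 : 0 < ⌈x⌉₊ := Nat.ceil_pos.mpr hx0
  obtain ⟨K, hK⟩ : ∃ K, ⌈x⌉₊ = K + 1 := ⟨⌈x⌉₊ - 1, by omega⟩
  have hc1 : x ≤ (K + 1 : ℕ) := hK ▸ Nat.le_ceil x
  have hc2 : ((K + 1 : ℕ) : ℝ) < x + 1 := hK ▸ Nat.ceil_lt_add_one hx0.le
  push_cast at hc1 hc2
  have h8 : 8 * K ≤ V1.card + V2.card + V3.card := by
    have : (8 * K : ℝ) ≤ V1.card + V2.card + V3.card := by linarith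
    exact_mod_cast this
  obtain ⟨T, hT⟩ : ∃ T, V1.card + V2.card + V3.card = T + 8 * K :=
    ⟨V1.card + V2.card + V3.card - 8 * K, by omega⟩
  have hT' : (V1.card + V2.card + V3.card : ℝ) = T + 8 * K := by exact_mod_cast hT
  have n2 : 0 ≤ ε * V2.card := by positivity
  have n3 : 0 ≤ ε * V3.card := by positivity
  have c : Ctx H V1 V2 V3 ε s ⌈s⌉₊ T K :=
    { h12 := hdisj12, h13 := hdisj13, h23 := hdisj23, hs := hspos, hεs := hεs, hseq := hs
      hε := hε, hε1 := hε1
      hL := by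
        intro A B C hA hB hC cA cB cC
        have h := (reg_bounds H huniform hdisj12 hdisj13 hdisj23 hreg hA hB hC cA cB cC).1
        have h0 : (0 : ℝ) ≤ (A.card : ℝ) * B.card * C.card := by positivity
        nlinarith
      sz1 := hsz1, sz2 := hsz2, hbal := hbal, hsk := Nat.le_ceil s
      hks := Nat.ceil_lt_add_one hspos.le
      hT0 := hT
      hTs := by linarith }
  have key : ∃ W1 W2 W3, Til H V1 V2 V3 (K + 1) W1 W2 W3 := by
    by_cases hK0 : K = 0
    · exact c.case1 hK0
    by_cases hA : 3 * K + ⌈s⌉₊ + 1 ≤ V1.card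
    · exact c.case2 (Nat.le_ceil _) (Nat.ceil_lt_add_one n2) (Nat.le_ceil _)
        (Nat.ceil_lt_add_one n3) hA
    · refine c.case3 hd ?_ (Nat.le_ceil _) (Nat.ceil_lt_add_one n2) (Nat.le_ceil _)
        (Nat.ceil_lt_add_one n3) (by omega) (by omega)
      intro A B C hA hB hC cA cB cC
      have l2 := c.le2
      have l3 := c.le3
      have hk := c.hsk
      have h := reg_bounds H huniform hdisj12 hdisj13 hdisj23 hreg hA hB hC (by rw [cA]; linarith)
        (by rw [cB]; linarith) (by rw [cC]; linarith)
      rw [cA, cB, cC] at h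
      have e : ((⌈s⌉₊ : ℝ) * ⌈s⌉₊ * ⌈s⌉₊) = (⌈s⌉₊ : ℝ) ^ 3 := by ring
      rw [e] at h
      exact h
  obtain ⟨W1, W2, W3, hW⟩ := key
  refine Til.final H hdisj12 hdisj13 hdisj23 hW _ ?_
  push_cast
  linarith
end

section
/- (Weak hypergraph regularity lemma for 3-uniform hypergraphs.) For all t₀ ≥ 0 and ε > 0 there exist T₀ = T₀(t₀,ε) and n₀ = n₀(t₀,ε) such that for every 3-uniform hypergraph H=(V,E) on n ≥ n₀ vertices there exists a partition V = V₀ ∪ V₁ ∪ … ∪ V_t such that (i) t₀ ≤ t ≤ T₀, (ii) |V₁| = |V₂| = … = |V_t| and |V₀| ≤ εn, and (iii) for all but at most ε·C(t,3) sets {i₁,i₂,i₃} ∈ ([t] choose 3), the triple (V_{i₁}, V_{i₂}, V_{i₃}) is ε-regular. -/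
open Finset

/-- The triple `(V₁, V₂, V₃)` is `ε`-regular in `H`: it is `(ε, d)`-regular for some
`d ≥ 0`. -/
def EpsRegTriple {V : Type} [DecidableEq V] (H : Finset (Finset V)) (ε : ℝ)
    (V1 V2 V3 : Finset V) : Prop :=
  ∃ d : ℝ, 0 ≤ d ∧ RegTriple H ε d V1 V2 V3


noncomputable def fInd {V : Type} [DecidableEq V] (H : Finset (Finset V)) (x : V × V × V) : ℝ :=
  if ({x.1, x.2.1, x.2.2} : Finset V) ∈ H then 1 else 0

theorem eCross_eq {V : Type} [DecidableEq V] (H : Finset (Finset V)) (hH : ∀ e ∈ H, e.card = 3)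
    (A B C : Finset V) (hAB : Disjoint A B) (hAC : Disjoint A C) (hBC : Disjoint B C) :
    (eCross H A B C : ℝ) = ∑ x ∈ A ×ˢ B ×ˢ C, fInd H x := by
  unfold fInd eCross
  rw [Finset.sum_boole]
  norm_cast
  symm
  rw [Finset.disjoint_left] at hAB hAC hBC
  have key : ∀ x ∈ A, ∀ y ∈ B, ∀ z ∈ C, ({x, y, z} : Finset V) ∩ A = {x} ∧
      ({x, y, z} : Finset V) ∩ B = {y} ∧ ({x, y, z} : Finset V) ∩ C = {z} := by
    intro x hx y hy z hz
    refine ⟨?_, ?_, ?_⟩ <;> ext w <;> simp only [mem_inter, mem_insert, mem_singleton] <;> grind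
  apply Finset.card_bij (fun x _ => ({x.1, x.2.1, x.2.2} : Finset V))
  · rintro ⟨x, y, z⟩ h
    simp only [mem_filter, mem_product] at h
    obtain ⟨⟨hx, hy, hz⟩, he⟩ := h
    obtain ⟨h1, h2, h3⟩ := key x hx y hy z hz
    simp only [mem_filter]
    exact ⟨he, by rw [h1]; simp, by rw [h2]; simp, by rw [h3]; simp⟩
  · rintro ⟨x, y, z⟩ h ⟨x', y', z'⟩ h' heq
    simp only [mem_filter, mem_product] at h h' heq
    obtain ⟨⟨hx, hy, hz⟩, he⟩ := h
    obtain ⟨⟨hx', hy', hz'⟩, he'⟩ := h'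
    obtain ⟨h1, h2, h3⟩ := key x hx y hy z hz
    obtain ⟨h1', h2', h3'⟩ := key x' hx' y' hy' z' hz'
    rw [heq] at h1 h2 h3
    have e1 := Finset.singleton_injective (h1.symm.trans h1')
    have e2 := Finset.singleton_injective (h2.symm.trans h2')
    have e3 := Finset.singleton_injective (h3.symm.trans h3')
    rw [e1, e2, e3]
  · intro e he
    simp only [mem_filter] at he
    obtain ⟨heH, h1, h2, h3⟩ := he
    obtain ⟨x, hx⟩ := Finset.card_eq_one.1 h1
    obtain ⟨y, hy⟩ := Finset.card_eq_one.1 h2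
    obtain ⟨z, hz⟩ := Finset.card_eq_one.1 h3
    have mx : x ∈ e ∩ A := by rw [hx]; simp
    have my : y ∈ e ∩ B := by rw [hy]; simp
    have mz : z ∈ e ∩ C := by rw [hz]; simp
    rw [mem_inter] at mx my mz
    have hxy : x ≠ y := by grind
    have hxz : x ≠ z := by grind
    have hyz : y ≠ z := by grind
    have hEq : ({x, y, z} : Finset V) = e := by
      apply Finset.eq_of_subset_of_card_le
      · intro w hw
        simp only [mem_insert, mem_singleton] at hw
        rcases hw with rfl | rfl | rfl
        · exact mx.1
        · exact my.1
        · exact mz.1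
      · rw [hH e heH, Finset.card_eq_three.2 ⟨x, y, z, hxy, hxz, hyz, rfl⟩]
    refine ⟨(x, y, z), ?_, hEq⟩
    simp only [mem_filter, mem_product]
    exact ⟨⟨mx.2, my.2, mz.2⟩, by rw [hEq]; exact heH⟩

theorem chop {V : Type} [Fintype V] [DecidableEq V] {α : Type} [Fintype α] (L : V → α) (m : ℕ)
    (hm : 1 ≤ m) :
    ∃ (t : ℕ) (Vs : Fin t → Finset V), (∀ i j, i ≠ j → Disjoint (Vs i) (Vs j)) ∧
      (∀ i, (Vs i).card = m) ∧ (∀ i, ∀ x ∈ Vs i, ∀ y ∈ Vs i, L x = L y) ∧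
      (univ \ univ.biUnion Vs).card ≤ Fintype.card α * m := by
  classical
  let good : Finset (Finset (Finset V)) := univ.filter (fun F =>
    (∀ s ∈ F, ∀ s' ∈ F, s ≠ s' → Disjoint s s') ∧ (∀ s ∈ F, s.card = m) ∧
    (∀ s ∈ F, ∀ x ∈ s, ∀ y ∈ s, L x = L y))
  have hne : good.Nonempty := ⟨∅, by simp [good]⟩
  obtain ⟨F, hF, hmax⟩ := Finset.exists_max_image good Finset.card hne
  have hF' := hF
  simp only [good, mem_filter, mem_univ, true_and] at hF
  obtain ⟨h1, h2, h3⟩ := hF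
  let e := F.equivFin.symm
  refine ⟨F.card, fun i => (e i).1, ?_, ?_, ?_, ?_⟩
  · intro i j hij
    apply h1 _ (e i).2 _ (e j).2
    intro h
    exact hij (e.injective (Subtype.ext h))
  · intro i; exact h2 _ (e i).2
  · intro i; exact h3 _ (e i).2
  · set R : Finset V := univ \ univ.biUnion (fun i => (e i).1) with hR
    have hRF : ∀ x ∈ R, ∀ s ∈ F, x ∉ s := by
      intro x hx s hs hxs
      rw [hR] at hx
      simp only [mem_sdiff, mem_univ, true_and, mem_biUnion, not_exists] at hx
      apply hx (e.symm ⟨s, hs⟩)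
      simpa using hxs
    by_contra hlt
    push Not at hlt
    have : ∃ a ∈ (univ : Finset α), m < (R.filter (fun x => L x = a)).card := by
      apply Finset.exists_lt_card_fiber_of_mul_lt_card_of_maps_to
      · intro x _; exact mem_univ _
      · simpa using hlt
    obtain ⟨a, -, ha⟩ := this
    obtain ⟨s, hs, hsc⟩ := Finset.exists_subset_card_eq ha.le
    have hsR : ∀ x ∈ s, x ∈ R ∧ L x = a := fun x hx => by simpa using hs hx
    have hsd : ∀ s' ∈ F, Disjoint s s' := by
      intro s' hs'
      rw [Finset.disjoint_left]
      intro x hx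
      exact hRF x (hsR x hx).1 s' hs'
    have hsF : s ∉ F := by
      intro hsF
      have hpos : s.Nonempty := by rw [← Finset.card_pos]; omega
      obtain ⟨x, hx⟩ := hpos
      exact hRF x (hsR x hx).1 s hsF hx
    have hg : insert s F ∈ good := by
      simp only [good, mem_filter, mem_univ, true_and, mem_insert]
      refine ⟨?_, ?_, ?_⟩
      · rintro s1 (rfl | hs1) s2 (rfl | hs2) hne
        · exact absurd rfl hne
        · exact hsd _ hs2
        · exact (hsd _ hs1).symm
        · exact h1 _ hs1 _ hs2 hne
      · rintro s1 (rfl | hs1)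
        · exact hsc
        · exact h2 _ hs1
      · rintro s1 (rfl | hs1) x hx y hy
        · rw [(hsR x hx).2, (hsR y hy).2]
        · exact h3 _ hs1 _ hx _ hy
    have := hmax _ hg
    rw [Finset.card_insert_of_notMem hsF] at this
    omega

/-- modification of `u` -/
noncomputable def modU {X P : Type} [DecidableEq X] (B : Finset P) (S : P → Finset X)
    (u : X → ℝ) (a d : P → ℝ) (x : X) : ℝ := u x + ∑ p ∈ B, if x ∈ S p then a p - d p else 0

theorem modU_case {X P : Type} [DecidableEq X] (B : Finset P) (S : P → Finset X)
    (hS : ∀ p ∈ B, ∀ q ∈ B, p ≠ q → Disjoint (S p) (S q))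
    (g : P → ℝ) (x : X) :
    (∃ p ∈ B, x ∈ S p ∧ ∀ g : P → ℝ, (∑ p ∈ B, if x ∈ S p then g p else 0) = g p) ∨
    (∀ g : P → ℝ, (∑ p ∈ B, if x ∈ S p then g p else 0) = 0) := by
  by_cases h : ∃ p ∈ B, x ∈ S p
  · obtain ⟨p, hp, hx⟩ := h
    refine Or.inl ⟨p, hp, hx, fun g => ?_⟩
    rw [Finset.sum_eq_single_of_mem p hp]
    · simp [hx]
    · intro q hq hqp
      have := Finset.disjoint_left.1 (hS p hp q hq hqp.symm) hx
      simp [this]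
  · right
    intro g
    apply Finset.sum_eq_zero
    intro p hp
    rw [if_neg]
    exact fun hx => h ⟨p, hp, hx⟩

theorem modU_nonneg {X P : Type} [DecidableEq X] (B : Finset P) (S : P → Finset X)
    (hS : ∀ p ∈ B, ∀ q ∈ B, p ≠ q → Disjoint (S p) (S q))
    (u : X → ℝ) (a d : P → ℝ) (hu : ∀ x, 0 ≤ u x) (ha : ∀ p, 0 ≤ a p)
    (hd : ∀ p ∈ B, ∀ x ∈ S p, u x = d p) (x : X) : 0 ≤ modU B S u a d x := by
  unfold modU
  rcases modU_case B S hS a x with ⟨p, hp, hx, h⟩ | h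
  · rw [h (fun p => a p - d p), hd p hp x hx]; linarith [ha p]
  · rw [h (fun p => a p - d p)]; linarith [hu x]

theorem modU_energy {X P : Type} [Fintype X] [DecidableEq X] (B : Finset P) (S : P → Finset X)
    (hS : ∀ p ∈ B, ∀ q ∈ B, p ≠ q → Disjoint (S p) (S q))
    (F u : X → ℝ) (a d : P → ℝ)
    (hd : ∀ p ∈ B, ∀ x ∈ S p, u x = d p)
    (ha : ∀ p ∈ B, ∑ x ∈ S p, F x = a p * (S p).card) :
    ∑ x, (F x - modU B S u a d x) ^ 2 + ∑ p ∈ B, (S p).card * (a p - d p) ^ 2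
      = ∑ x, (F x - u x) ^ 2 := by
  have pt : ∀ x, (F x - u x) ^ 2 = (F x - modU B S u a d x) ^ 2 +
      ∑ p ∈ B, if x ∈ S p then ((F x - d p) ^ 2 - (F x - a p) ^ 2) else 0 := by
    intro x
    unfold modU
    rcases modU_case B S hS a x with ⟨p, hp, hx, h⟩ | h
    · rw [h (fun p => a p - d p), h (fun p => (F x - d p) ^ 2 - (F x - a p) ^ 2), hd p hp x hx]; ring
    · rw [h (fun p => a p - d p), h (fun p => (F x - d p) ^ 2 - (F x - a p) ^ 2)]; ring
  rw [Finset.sum_congr rfl (fun x _ => pt x), Finset.sum_add_distrib, Finset.sum_comm]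
  congr 1
  apply Finset.sum_congr rfl
  intro p hp
  rw [← Finset.sum_filter]
  have : univ.filter (fun x => x ∈ S p) = S p := by ext; simp
  rw [this]
  have e : ∀ x ∈ S p, (F x - d p) ^ 2 - (F x - a p) ^ 2
      = 2 * (a p - d p) * F x + (d p ^ 2 - a p ^ 2) := by intro x _; ring
  rw [Finset.sum_congr rfl e, Finset.sum_add_distrib, ← Finset.mul_sum, ha p hp]
  simp
  ring

def Concl {V : Type} [Fintype V] [DecidableEq V] (H : Finset (Finset V)) (ε : ℝ) (t₀ T₀ : ℕ) :
    Prop :=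
  ∃ (t : ℕ) (V0 : Finset V) (Vs : Fin t → Finset V),
        t₀ ≤ t ∧ t ≤ T₀ ∧
        (∀ i, Disjoint V0 (Vs i)) ∧
        (∀ i j, i ≠ j → Disjoint (Vs i) (Vs j)) ∧
        (V0 ∪ Finset.univ.biUnion Vs = Finset.univ) ∧
        (∀ i j, (Vs i).card = (Vs j).card) ∧
        ((V0.card : ℝ) ≤ ε * Fintype.card V) ∧
        ((({p : Fin t × Fin t × Fin t | p.1 < p.2.1 ∧ p.2.1 < p.2.2 ∧
            ¬ EpsRegTriple H ε (Vs p.1) (Vs p.2.1) (Vs p.2.2)}).ncard : ℝ)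
          ≤ ε * (t.choose 3 : ℝ))

def Meas {V α : Type} (L : V → α) (u : V × V × V → ℝ) : Prop :=
  ∀ x y z x' y' z', L x = L x' → L y = L y' → L z = L z' → u (x, y, z) = u (x', y', z')

theorem choose_bound (t : ℕ) (ht : 3 ≤ t) : (t : ℝ) ^ 3 / 27 ≤ (t.choose 3 : ℝ) := by
  obtain ⟨s, rfl⟩ := Nat.exists_eq_add_of_le ht
  have h : (3 + s).choose 3 * 6 = (s + 3) * (s + 2) * (s + 1) := by
    have := Nat.descFactorial_eq_factorial_mul_choose (3 + s) 3
    simp [Nat.descFactorial, Nat.factorial] at this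
    rw [Nat.mul_comm, ← this]
    have e1 : 3 + s - 2 = s + 1 := by omega
    rw [e1]; ring
  have h' : ((3 + s).choose 3 : ℝ) * 6 = (s + 3) * (s + 2) * (s + 1) := by exact_mod_cast h
  push_cast
  have : (0 : ℝ) ≤ s := by positivity
  nlinarith [mul_nonneg this this, mul_nonneg (mul_nonneg this this) this]

theorem refine_step {V : Type} [Fintype V] [DecidableEq V] (H : Finset (Finset V))
    (hH : ∀ e ∈ H, e.card = 3) (ε : ℝ) (hε : 0 < ε)
    {α : Type} [Fintype α] (L : V → α) (u : V × V × V → ℝ) (hu : ∀ x, 0 ≤ u x) (hL : Meas L u)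
    (t m : ℕ) (ht : 3 ≤ t) (hm : 1 ≤ m) (hn : (Fintype.card V : ℝ) ≤ 2 * (t * m))
    (Vs : Fin t → Finset V)
    (hdis : ∀ i j, i ≠ j → Disjoint (Vs i) (Vs j)) (hcard : ∀ i, (Vs i).card = m)
    (hconst : ∀ i, ∀ x ∈ Vs i, ∀ y ∈ Vs i, L x = L y)
    (hbad : ε * (t.choose 3 : ℝ) < (({p : Fin t × Fin t × Fin t | p.1 < p.2.1 ∧ p.2.1 < p.2.2 ∧
            ¬ EpsRegTriple H ε (Vs p.1) (Vs p.2.1) (Vs p.2.2)}).ncard : ℝ)) :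
    ∃ (L' : V → α × (Fin t × Fin t × Fin t → Bool × Bool × Bool)) (u' : V × V × V → ℝ),
      (∀ x, 0 ≤ u' x) ∧ Meas L' u' ∧
      ∑ x, (fInd H x - u' x) ^ 2 + ε ^ 6 / 216 * (Fintype.card V : ℝ) ^ 3
        ≤ ∑ x, (fInd H x - u x) ^ 2 := by
  classical
  have hne : ∀ i, (Vs i).Nonempty := fun i => by rw [← Finset.card_pos, hcard]; omega
  choose v hv using hne
  let B : Finset (Fin t × Fin t × Fin t) := univ.filter (fun p => p.1 < p.2.1 ∧ p.2.1 < p.2.2 ∧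
            ¬ EpsRegTriple H ε (Vs p.1) (Vs p.2.1) (Vs p.2.2))
  have hB : (({p : Fin t × Fin t × Fin t | p.1 < p.2.1 ∧ p.2.1 < p.2.2 ∧
            ¬ EpsRegTriple H ε (Vs p.1) (Vs p.2.1) (Vs p.2.2)}).ncard) = B.card := by
    rw [← Set.ncard_coe_finset]; congr 1; ext; simp [B]
  rw [hB] at hbad
  let d : Fin t × Fin t × Fin t → ℝ := fun p => u (v p.1, v p.2.1, v p.2.2)
  have hw : ∀ p : Fin t × Fin t × Fin t, ∃ A1 A2 A3 : Finset V, p ∈ B →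
      A1 ⊆ Vs p.1 ∧ A2 ⊆ Vs p.2.1 ∧ A3 ⊆ Vs p.2.2 ∧ ε * m ≤ A1.card ∧ ε * m ≤ A2.card ∧
      ε * m ≤ A3.card ∧ ε < |triDensity H A1 A2 A3 - d p| := by
    intro p
    by_cases hp : p ∈ B
    · have hp2 := hp
      simp only [B, mem_filter, mem_univ, true_and] at hp2
      obtain ⟨-, -, h⟩ := hp2
      unfold EpsRegTriple RegTriple at h
      push Not at h
      obtain ⟨A1, A2, A3, h1, h2, h3, h4, h5, h6, h7⟩ := h (d p) (hu _)
      rw [hcard] at h4 h5 h6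
      exact ⟨A1, A2, A3, fun _ => ⟨h1, h2, h3, h4, h5, h6, h7⟩⟩
    · exact ⟨∅, ∅, ∅, fun h => absurd h hp⟩
  choose A1 A2 A3 hA using hw
  let S : Fin t × Fin t × Fin t → Finset (V × V × V) := fun p => A1 p ×ˢ A2 p ×ˢ A3 p
  let a : Fin t × Fin t × Fin t → ℝ := fun p => triDensity H (A1 p) (A2 p) (A3 p)
  have hidx : ∀ i j x, x ∈ Vs i → x ∈ Vs j → i = j := by
    intro i j x hi hj
    by_contra hij
    exact Finset.disjoint_left.1 (hdis i j hij) hi hj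
  have hS : ∀ p ∈ B, ∀ q ∈ B, p ≠ q → Disjoint (S p) (S q) := by
    intro p hp q hq hpq
    rw [Finset.disjoint_left]
    rintro ⟨x, y, z⟩ hx hx'
    simp only [S, mem_product] at hx hx'
    obtain ⟨p1, p2, p3, -⟩ := hA p hp
    obtain ⟨q1, q2, q3, -⟩ := hA q hq
    apply hpq
    have e1 := hidx _ _ _ (p1 hx.1) (q1 hx'.1)
    have e2 := hidx _ _ _ (p2 hx.2.1) (q2 hx'.2.1)
    have e3 := hidx _ _ _ (p3 hx.2.2) (q3 hx'.2.2)
    exact Prod.ext e1 (Prod.ext e2 e3)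
  have hd : ∀ p ∈ B, ∀ x ∈ S p, u x = d p := by
    rintro p hp ⟨x, y, z⟩ hx
    simp only [S, mem_product] at hx
    obtain ⟨p1, p2, p3, -⟩ := hA p hp
    exact hL _ _ _ _ _ _ (hconst _ _ (p1 hx.1) _ (hv _)) (hconst _ _ (p2 hx.2.1) _ (hv _))
      (hconst _ _ (p3 hx.2.2) _ (hv _))
  have hmpos : (0 : ℝ) < m := by exact_mod_cast hm
  have hScard : ∀ p, ((S p).card : ℝ) = (A1 p).card * (A2 p).card * (A3 p).card := by
    intro p; simp only [S, card_product]; push_cast; ring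
  have ha : ∀ p ∈ B, ∑ x ∈ S p, fInd H x = a p * (S p).card := by
    intro p hp
    obtain ⟨p1, p2, p3, c1, c2, c3, -⟩ := hA p hp
    have hp2 := hp
    simp only [B, mem_filter, mem_univ, true_and] at hp2
    obtain ⟨l1, l2, -⟩ := hp2
    have D12 : Disjoint (A1 p) (A2 p) := Finset.disjoint_of_subset_left p1
      (Finset.disjoint_of_subset_right p2 (hdis _ _ l1.ne))
    have D13 : Disjoint (A1 p) (A3 p) := Finset.disjoint_of_subset_left p1
      (Finset.disjoint_of_subset_right p3 (hdis _ _ (l1.trans l2).ne))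
    have D23 : Disjoint (A2 p) (A3 p) := Finset.disjoint_of_subset_left p2
      (Finset.disjoint_of_subset_right p3 (hdis _ _ l2.ne))
    have := eCross_eq H hH _ _ _ D12 D13 D23
    simp only [S, a]
    rw [← this, triDensity]
    have hpos := hScard p
    simp only [S] at hpos
    rw [hpos]
    have : 0 < ε * m := by positivity
    have : (0 : ℝ) < (A1 p).card := by linarith
    have : (0 : ℝ) < (A2 p).card := by linarith
    have : (0 : ℝ) < (A3 p).card := by linarith
    field_simp
  refine ⟨fun x => (L x, fun p => (decide (x ∈ A1 p), decide (x ∈ A2 p), decide (x ∈ A3 p))),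
    modU B S u a d, ?_, ?_, ?_⟩
  · apply modU_nonneg B S hS u a d hu _ hd
    intro p
    simp only [a, triDensity]
    positivity
  · intro x y z x' y' z' hx hy hz
    simp only [Prod.mk.injEq, funext_iff, decide_eq_decide] at hx hy hz
    unfold modU
    rw [hL x y z x' y' z' hx.1 hy.1 hz.1]
    congr 1
    apply Finset.sum_congr rfl
    intro p _
    have : (x, y, z) ∈ S p ↔ (x', y', z') ∈ S p := by
      simp only [S, mem_product]
      rw [(hx.2 p).1, (hy.2 p).2.1, (hz.2 p).2.2]
    simp only [this]
  · rw [← modU_energy B S hS (fInd H) u a d hd ha]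
    have hp : ∀ p ∈ B, ε ^ 5 * (m : ℝ) ^ 3 ≤ (S p).card * (a p - d p) ^ 2 := by
      intro p hp
      obtain ⟨-, -, -, c1, c2, c3, c4⟩ := hA p hp
      rw [hScard]
      have h1 : ε ^ 2 ≤ (a p - d p) ^ 2 := by
        rw [← sq_abs (a p - d p)]
        exact pow_le_pow_left₀ hε.le c4.le 2
      have h0 : 0 ≤ ε * m := by positivity
      calc ε ^ 5 * (m : ℝ) ^ 3 = (ε * m) * (ε * m) * (ε * m) * ε ^ 2 := by ring
        _ ≤ _ := by gcongr
    have hsum := Finset.card_nsmul_le_sum B _ _ hp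
    rw [nsmul_eq_mul] at hsum
    have hc := choose_bound t ht
    have h2 : (Fintype.card V : ℝ) ^ 3 ≤ (2 * (t * m)) ^ 3 := by gcongr
    have h3 : ε * (t ^ 3 / 27) * (ε ^ 5 * (m : ℝ) ^ 3) ≤ B.card * (ε ^ 5 * (m : ℝ) ^ 3) := by
      apply mul_le_mul_of_nonneg_right _ (by positivity)
      refine le_trans ?_ hbad.le
      gcongr
    have h4 : ε ^ 6 / 216 * (Fintype.card V : ℝ) ^ 3 ≤ ε ^ 6 / 216 * (2 * (t * m)) ^ 3 := by gcongr
    have h5 : ε ^ 6 / 216 * (2 * (t * m : ℝ)) ^ 3 = ε * (t ^ 3 / 27) * (ε ^ 5 * (m : ℝ) ^ 3) := by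
      ring
    linarith

theorem iterate (t₀ : ℕ) (ht₀ : 3 ≤ t₀) (ε : ℝ) (hε : 0 < ε) (hε2 : ε ≤ 1 / 2) (k : ℕ) :
    ∀ N : ℕ, t₀ ≤ N → ∃ T₀ n₀ : ℕ, ∀ (V : Type) [Fintype V] [DecidableEq V] (H : Finset (Finset V)),
      n₀ ≤ Fintype.card V → (∀ e ∈ H, e.card = 3) →
      ∀ (α : Type) [Fintype α] (L : V → α) (u : V × V × V → ℝ), Fintype.card α ≤ N →
      (∀ x, 0 ≤ u x) → Meas L u →
      ∑ x, (fInd H x - u x) ^ 2 < k * (ε ^ 6 / 216 * (Fintype.card V : ℝ) ^ 3) →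
      Concl H ε t₀ T₀ := by
  induction k with
  | zero =>
    intro N _
    refine ⟨0, 0, ?_⟩
    intro V _ _ H _ _ α _ L u _ _ _ h
    exfalso
    have : 0 ≤ ∑ x, (fInd H x - u x) ^ 2 := Finset.sum_nonneg (fun x _ => sq_nonneg _)
    simp at h
    linarith
  | succ k ih =>
    intro N hN
    let T : ℕ := ⌈2 * N / ε⌉₊
    obtain ⟨T1, n1, h1⟩ := ih (N * 8 ^ (T ^ 3))
      (hN.trans (Nat.le_mul_of_pos_right _ (by positivity)))
    refine ⟨max T T1, max T n1, ?_⟩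
    intro V _ _ H hn hH α _ L u hα hu hL hE
    have hTn : (2 * N / ε : ℝ) ≤ Fintype.card V :=
      (Nat.le_ceil _).trans (Nat.cast_le.2 ((le_max_left _ _).trans hn))
    set n : ℝ := (Fintype.card V : ℝ) with hndef
    have hNpos : (0 : ℝ) < N := by
      have : 0 < N := by omega
      exact_mod_cast this
    have hεn : 2 * N ≤ ε * n := by
      rw [div_le_iff₀ hε] at hTn; linarith
    have hnpos : 0 < n := by
      by_contra h; push Not at h; nlinarith
    let m : ℕ := ⌊ε * n / N⌋₊
    have hq2 : 2 ≤ ε * n / N := by rw [le_div_iff₀ hNpos]; exact hεn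
    have hm_le : (m : ℝ) ≤ ε * n / N := Nat.floor_le (by positivity)
    have hm_gt : ε * n / N < m + 1 := Nat.lt_floor_add_one _
    have hm_ge : ε * n / N ≤ 2 * m := by linarith
    have hm1r : (1 : ℝ) < (m : ℝ) + 1 := by linarith
    have hm1 : 1 ≤ m := by
      have : (0 : ℝ) < m := by linarith
      exact_mod_cast this
    have hmpos : (0 : ℝ) < m := by exact_mod_cast hm1
    rw [le_div_iff₀ hNpos] at hm_le
    rw [div_le_iff₀ hNpos] at hm_ge
    obtain ⟨t, Vs, hdis, hcard, hconst, hleft⟩ := chop L m hm1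
    have hU : (univ.biUnion Vs).card = t * m := by
      rw [Finset.card_biUnion (fun i _ j _ hij => hdis i j hij)]
      simp [hcard]
    have hsplit : (univ \ univ.biUnion Vs).card + t * m = Fintype.card V := by
      rw [← hU, Finset.card_sdiff_add_card_eq_card (Finset.subset_univ _), Finset.card_univ]
    have hsplitR : ((univ \ univ.biUnion Vs).card : ℝ) + t * m = n := by
      rw [hndef, ← hsplit]; push_cast; rfl
    have hleftR : ((univ \ univ.biUnion Vs).card : ℝ) ≤ ε * n := by
      have : ((univ \ univ.biUnion Vs).card : ℝ) ≤ Fintype.card α * m := by exact_mod_cast hleft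
      have h' : (Fintype.card α : ℝ) ≤ N := by exact_mod_cast hα
      nlinarith
    have htm : n ≤ 2 * (t * m) := by nlinarith
    have htN : N ≤ t := by
      have : (N : ℝ) * m ≤ t * m := by nlinarith
      have := le_of_mul_le_mul_right this hmpos
      exact_mod_cast this
    have htT : t ≤ T := by
      have h0 : (0 : ℝ) ≤ (univ \ univ.biUnion Vs).card := by positivity
      have : (t : ℝ) ≤ 2 * N / ε := by
        rw [le_div_iff₀ hε]
        have : (t * ε : ℝ) * m ≤ (2 * N) * m := by nlinarith
        exact le_of_mul_le_mul_right this hmpos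
      have h3 := this.trans (Nat.le_ceil _)
      exact Nat.cast_le.1 h3
    by_cases hgood : ((({p : Fin t × Fin t × Fin t | p.1 < p.2.1 ∧ p.2.1 < p.2.2 ∧
            ¬ EpsRegTriple H ε (Vs p.1) (Vs p.2.1) (Vs p.2.2)}).ncard : ℝ)
          ≤ ε * (t.choose 3 : ℝ))
    · refine ⟨t, univ \ univ.biUnion Vs, Vs, hN.trans htN, htT.trans (le_max_left _ _), ?_, hdis,
        ?_, ?_, hleftR, hgood⟩
      · intro i
        apply Finset.disjoint_of_subset_right _ Finset.sdiff_disjoint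
        exact Finset.subset_biUnion_of_mem Vs (mem_univ i)
      · exact Finset.sdiff_union_of_subset (Finset.subset_univ _)
      · intro i j; rw [hcard, hcard]
    · push Not at hgood
      obtain ⟨L', u', hu', hL', hE'⟩ := refine_step H hH ε hε L u hu hL t m (by omega) hm1 htm Vs
        hdis hcard hconst hgood
      have hc : Concl H ε t₀ T1 := by
        refine h1 V H ((le_max_right _ _).trans hn) hH _ L' u' ?_ hu' hL' ?_
        · rw [Fintype.card_prod, Fintype.card_fun]
          simp only [Fintype.card_prod, Fintype.card_bool, Fintype.card_fin]
          apply Nat.mul_le_mul hα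
          have : t * (t * t) ≤ T ^ 3 := by
            calc t * (t * t) = t ^ 3 := by ring
              _ ≤ T ^ 3 := Nat.pow_le_pow_left htT 3
          exact Nat.pow_le_pow_right (by norm_num) this
        · push_cast at hE
          linarith
      obtain ⟨t', V0, Vs', c1, c2, c3⟩ := hc
      exact ⟨t', V0, Vs', c1, c2.trans (le_max_right _ _), c3⟩

theorem EpsRegTriple.mono' {V : Type} [DecidableEq V] {H : Finset (Finset V)} {ε ε' : ℝ}
    (h : ε' ≤ ε) {A B C : Finset V} (hr : EpsRegTriple H ε' A B C) : EpsRegTriple H ε A B C := by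
  obtain ⟨d, hd, hr⟩ := hr
  refine ⟨d, hd, fun A1 A2 A3 s1 s2 s3 c1 c2 c3 => ?_⟩
  refine (hr A1 A2 A3 s1 s2 s3 ?_ ?_ ?_).trans h
  · exact le_trans (by gcongr) c1
  · exact le_trans (by gcongr) c2
  · exact le_trans (by gcongr) c3

theorem weak_hypergraph_regularity (t₀ : ℕ) (ε : ℝ) (hε : 0 < ε) :
    ∃ T₀ n₀ : ℕ, ∀ (V : Type) [Fintype V] [DecidableEq V], ∀ (H : Finset (Finset V)) (n : ℕ),
      Fintype.card V = n → n₀ ≤ n →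
      (∀ e ∈ H, e.card = 3) →
      ∃ (t : ℕ) (V0 : Finset V) (Vs : Fin t → Finset V),
        t₀ ≤ t ∧ t ≤ T₀ ∧
        (∀ i, Disjoint V0 (Vs i)) ∧
        (∀ i j, i ≠ j → Disjoint (Vs i) (Vs j)) ∧
        (V0 ∪ Finset.univ.biUnion Vs = Finset.univ) ∧
        (∀ i j, (Vs i).card = (Vs j).card) ∧
        ((V0.card : ℝ) ≤ ε * n) ∧
        ((({p : Fin t × Fin t × Fin t | p.1 < p.2.1 ∧ p.2.1 < p.2.2 ∧
            ¬ EpsRegTriple H ε (Vs p.1) (Vs p.2.1) (Vs p.2.2)}).ncard : ℝ)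
          ≤ ε * (t.choose 3 : ℝ)) := by
  let ε' := min ε (1 / 2)
  have hε' : 0 < ε' := lt_min hε (by norm_num)
  have hle : ε' ≤ ε := min_le_left _ _
  obtain ⟨k, hk⟩ := exists_nat_gt (1 / (ε' ^ 6 / 216))
  have hc : 0 < ε' ^ 6 / 216 := by positivity
  rw [div_lt_iff₀ hc] at hk
  obtain ⟨T₀, n₀, h⟩ := iterate (max t₀ 3) (le_max_right _ _) ε' hε' (min_le_right _ _) k
    (max t₀ 3) le_rfl
  refine ⟨T₀, max n₀ 1, ?_⟩
  intro V _ _ H n hn hn0 hH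
  subst hn
  have hnpos : (0 : ℝ) < Fintype.card V := by
    have : 0 < Fintype.card V := (le_max_right _ _).trans hn0
    exact_mod_cast this
  have hcon : Concl H ε' (max t₀ 3) T₀ := by
    refine h V H ((le_max_left _ _).trans hn0) hH Unit (fun _ => ()) (fun _ => 0) ?_
      (fun _ => le_rfl) (fun _ _ _ _ _ _ _ _ _ => rfl) ?_
    · simp
    · have h1 : ∑ x : V × V × V, (fInd H x - 0) ^ 2 ≤ ∑ x : V × V × V, (1 : ℝ) := by
        apply Finset.sum_le_sum
        intro x _
        unfold fInd
        split_ifs <;> norm_num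
      have h2 : ∑ x : V × V × V, (1 : ℝ) = (Fintype.card V : ℝ) ^ 3 := by
        simp; ring
      have h3 : (0 : ℝ) < (Fintype.card V : ℝ) ^ 3 := by positivity
      nlinarith
  obtain ⟨t, V0, Vs, c1, c2, c3, c4, c5, c6, c7, c8⟩ := hcon
  refine ⟨t, V0, Vs, (le_max_left _ _).trans c1, c2, c3, c4, c5, c6, c7.trans (by gcongr), ?_⟩
  refine le_trans ?_ (c8.trans (by gcongr))
  norm_cast
  apply Set.ncard_le_ncard _ (Set.toFinite _)
  rintro p ⟨p1, p2, p3⟩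
  exact ⟨p1, p2, fun hr => p3 (hr.mono' hle)⟩
end
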